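/- Let n ≥ 1 be an integer, 0 < s < 1, p = 1, and let u = χ_E be the characteristic function of a measurable set E ⊂ ℝⁿ which is 2π-periodic in the variable x₁, with finite periodic Gagliardo seminorm [u]^{per}_{W^{s,1}}. Then [u^{*per}]^{per}_{W^{s,1}} = [u]^{per}_{W^{s,1}} holds if and only if there exists a ∈ ℝ such that u(x₁,x') = u^{*per}(x₁ + a, x') for almost every (x₁,x') ∈ ℝ × ℝ^{n−1}. -/

import Mathlib

open MeasureTheory Real
open scoped ENNReal

/-- For a measurable set `A ⊂ ℝ` of finite measure, `A^* := (−|A|/2, |A|/2)`. -/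
noncomputable def symmSet (A : Set ℝ) : Set ℝ :=
  Set.Ioo (-((volume A).toReal / 2)) ((volume A).toReal / 2)

/-- Symmetric decreasing rearrangement of a (nonnegative) function on `(−π,π)`:
`u^*(x) := ∫₀^∞ χ_{{u>t}^*}(x) dt`. -/
noncomputable def symmRearr (u : ℝ → ℝ) : ℝ → ℝ := fun x =>
  ∫ t in Set.Ioi (0 : ℝ),
    (symmSet {y | y ∈ Set.Ioo (-π) π ∧ t < u y}).indicator (fun _ => (1 : ℝ)) x

/-- The `2π`-periodic extension of (the restriction to `[−π,π)` of) a function. -/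
noncomputable def periodize (f : ℝ → ℝ) : ℝ → ℝ := fun x =>
  f (x - 2 * π * (⌊(x + π) / (2 * π)⌋ : ℝ))

/-- The periodic rearrangement `f^{*per}`: the `2π`-periodic extension of `(f·χ_{(−π,π)})^*`. -/
noncomputable def perRearr (f : ℝ → ℝ) : ℝ → ℝ := periodize (symmRearr f)
/-- `([u]^{per}_{W^{s,p}})^p`, the `p`-th power of the periodic Gagliardo seminorm on
`ℝⁿ = ℝ × ℝ^{n−1}` (so `n = m + 1`), for a function which is `2π`-periodic in the first
variable. -/
noncomputable def gagP (m : ℕ) (s p : ℝ) (u : ℝ × EuclideanSpace ℝ (Fin m) → ℝ) : ℝ≥0∞ :=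
  ∫⁻ x in {x : ℝ × EuclideanSpace ℝ (Fin m) | x.1 ∈ Set.Ioo (-π) π},
    ∫⁻ y : ℝ × EuclideanSpace ℝ (Fin m),
      ENNReal.ofReal (|u x - u y| ^ p /
        Real.sqrt ((x.1 - y.1) ^ 2 + ‖x.2 - y.2‖ ^ 2) ^ ((m : ℝ) + 1 + s * p))

/-- The periodic Gagliardo seminorm `[u]^{per}_{W^{s,p}}`. -/
noncomputable def gagSeminorm (m : ℕ) (s p : ℝ) (u : ℝ × EuclideanSpace ℝ (Fin m) → ℝ) :
    ℝ≥0∞ :=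
  gagP m s p u ^ (1 / p)
/-- The periodic rearrangement in the first variable:
`u^{*per}(x₁,x') := (|u(·,x')|)^{*per}(x₁)`. -/
noncomputable def perRearr1 (m : ℕ) (u : ℝ × EuclideanSpace ℝ (Fin m) → ℝ) :
    ℝ × EuclideanSpace ℝ (Fin m) → ℝ := fun x =>
  perRearr (fun t => |u (t, x.2)|) x.1


/-- `2π`-periodic measurable `{0,1}`-valued functions. -/
structure PF (f : ℝ → ℝ) : Prop where
  meas : Measurable f
  per : Function.Periodic f (2 * π)
  zo : ∀ x, f x = 0 ∨ f x = 1

namespace PF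
variable {f g : ℝ → ℝ}

lemma nonneg (hf : PF f) (x : ℝ) : 0 ≤ f x := by rcases hf.zo x with h | h <;> simp [h]
lemma le_one (hf : PF f) (x : ℝ) : f x ≤ 1 := by rcases hf.zo x with h | h <;> simp [h]

lemma ii (hf : PF f) (a b : ℝ) : IntervalIntegrable f volume a b := by
  refine (intervalIntegrable_const (c := (1:ℝ))).mono_fun hf.meas.aestronglyMeasurable ?_
  filter_upwards with x
  have := hf.nonneg x
  have := hf.le_one x
  simp [abs_le]; constructor <;> linarith

lemma cont (hf : PF f) : Continuous fun x => ∫ z in (0:ℝ)..x, f z :=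
  intervalIntegral.continuous_primitive (fun a b => hf.ii a b) 0

lemma int_le (hf : PF f) {a b : ℝ} (hab : a ≤ b) : ∫ z in a..b, f z ≤ b - a := by
  have := intervalIntegral.integral_mono_on hab (hf.ii a b) (intervalIntegrable_const (c := (1:ℝ)))
    (fun x _ => hf.le_one x)
  simpa using this

lemma int_nonneg (hf : PF f) {a b : ℝ} (hab : a ≤ b) : 0 ≤ ∫ z in a..b, f z :=
  intervalIntegral.integral_nonneg hab (fun x _ => hf.nonneg x)

lemma int_add (hf : PF f) (a b c : ℝ) : (∫ z in a..b, f z) + ∫ z in b..c, f z = ∫ z in a..c, f z :=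
  intervalIntegral.integral_add_adjacent_intervals (hf.ii a b) (hf.ii b c)

lemma int_period (hf : PF f) (y : ℝ) : ∫ z in y..(y + 2 * π), f z = ∫ z in (0:ℝ)..(2 * π), f z := by
  have := hf.per.intervalIntegral_add_eq y 0
  simpa using this

end PF

noncomputable def HH (f : ℝ → ℝ) (l y : ℝ) : ℝ := ∫ z in y..(y + l), f z

noncomputable def MM (f : ℝ → ℝ) (t l : ℝ) : ℝ := ∫ y in (0:ℝ)..(2 * π), min (HH f l y) t

section
variable {f g : ℝ → ℝ}

lemma HH_eq (hf : PF f) (l y : ℝ) :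
    HH f l y = (∫ z in (0:ℝ)..(y+l), f z) - ∫ z in (0:ℝ)..y, f z := by
  rw [HH, ← hf.int_add 0 y (y+l)]; ring

lemma HH_cont (hf : PF f) : Continuous fun p : ℝ × ℝ => HH f p.1 p.2 := by
  have h := hf.cont
  simp only [HH_eq hf]
  exact (h.comp (continuous_snd.add continuous_fst)).sub (h.comp continuous_snd)

lemma HH_cont_y (hf : PF f) (l : ℝ) : Continuous fun y => HH f l y :=
  (HH_cont hf).comp (by fun_prop : Continuous fun y : ℝ => (l, y))

lemma HH_per (hf : PF f) (l : ℝ) : Function.Periodic (HH f l) (2 * π) := by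
  intro y
  unfold HH
  have := intervalIntegral.integral_comp_add_right (a := y) (b := y + l) f (2 * π)
  simp only [hf.per _] at this
  rw [this]; congr 1; ring

lemma HH_nonneg (hf : PF f) {l : ℝ} (hl : 0 ≤ l) (y : ℝ) : 0 ≤ HH f l y :=
  hf.int_nonneg (by linarith)

lemma HH_le (hf : PF f) {l : ℝ} (hl : 0 ≤ l) (y : ℝ) : HH f l y ≤ l := by
  have := hf.int_le (a := y) (b := y + l) (by linarith)
  simpa [HH] using this

lemma MM_cont (hf : PF f) (t : ℝ) : Continuous (MM f t) := by
  unfold MM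
  apply intervalIntegral.continuous_parametric_intervalIntegral_of_continuous' (μ := volume)
  exact (HH_cont hf).min continuous_const

lemma MM_shift (hf : PF f) (t l c : ℝ) :
    MM f t l = ∫ y in (0:ℝ)..(2 * π), min (HH f l (y - c)) t := by
  have hp : Function.Periodic (fun y => min (HH f l y) t) (2 * π) := fun y => by
    simp [HH_per hf l y]
  have h1 := intervalIntegral.integral_comp_sub_right (a := 0) (b := 2 * π)
    (fun y => min (HH f l y) t) c
  rw [h1]
  have := hp.intervalIntegral_add_eq (0 - c) 0
  rw [zero_add] at this
  rw [MM, ← this]; congr 1; ring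

lemma MM_wright (hf : PF f) (t : ℝ) {l l' d : ℝ} (hll : l ≤ l') (hd : 0 ≤ d) :
    MM f t (l' + d) - MM f t l' ≤ MM f t (l + d) - MM f t l := by
  rw [MM_shift hf t (l' + d) l', MM_shift hf t l' l', MM_shift hf t (l + d) l, MM_shift hf t l l]
  have hc : ∀ a b : ℝ, IntervalIntegrable (fun y => min (HH f a (y - b)) t) volume 0 (2 * π) := by
    intro a b
    apply Continuous.intervalIntegrable
    exact ((HH_cont_y hf a).comp (continuous_id.sub continuous_const)).min continuous_const
  rw [← intervalIntegral.integral_sub (hc _ _) (hc _ _),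
    ← intervalIntegral.integral_sub (hc _ _) (hc _ _)]
  apply intervalIntegral.integral_mono_on (by positivity) ((hc _ _).sub (hc _ _))
    ((hc _ _).sub (hc _ _))
  intro y _
  have e1 : HH f (l' + d) (y - l') = (∫ z in (y - l')..(y - l), f z) + (∫ z in (y - l)..y, f z)
      + ∫ z in y..(y + d), f z := by
    rw [hf.int_add, hf.int_add, HH]; congr 1; ring
  have e2 : HH f l' (y - l') = (∫ z in (y - l')..(y - l), f z) + (∫ z in (y - l)..y, f z) := by
    rw [hf.int_add, HH]; congr 1; ring
  have e3 : HH f (l + d) (y - l) = (∫ z in (y - l)..y, f z) + ∫ z in y..(y + d), f z := by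
    rw [hf.int_add, HH]; congr 1; ring
  have e4 : HH f l (y - l) = (∫ z in (y - l)..y, f z) := by
    rw [HH]; congr 1; ring
  have p1 := hf.int_nonneg (a := y - l') (b := y - l) (by linarith)
  have p2 := hf.int_nonneg (a := y) (b := y + d) (by linarith)
  rw [e1, e2, e3, e4]
  generalize (∫ z in (y - l')..(y - l), f z) = P at *
  generalize (∫ z in (y - l)..y, f z) = Q at *
  generalize (∫ z in y..(y + d), f z) = R at *
  rcases min_cases (P + Q + R) t with h1 | h1 <;> rcases min_cases (P + Q) t with h2 | h2 <;>
  rcases min_cases (Q + R) t with h3 | h3 <;> rcases min_cases (Q) t with h4 | h4 <;> linarith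

lemma concave_of_wright {G : ℝ → ℝ} (hG : Continuous G)
    (hw : ∀ l l' d : ℝ, l ≤ l' → 0 ≤ d → G (l' + d) - G l' ≤ G (l + d) - G l)
    {p q r : ℝ} (hpq : p ≤ q) (hqr : q ≤ r) :
    (r - q) * G p + (q - p) * G r ≤ (r - p) * G q := by
  set F : ℝ → ℝ := fun x => (r - p) * G x - ((r - x) * G p + (x - p) * G r) with hF
  have hpr : p ≤ r := hpq.trans hqr
  have hFc : Continuous F := by fun_prop
  by_contra hcon
  push Not at hcon
  have hq : F q < 0 := by simp only [hF]; linarith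
  obtain ⟨x1, hx1, hmin⟩ := isCompact_Icc.exists_isMinOn (Set.nonempty_Icc.2 hpr) hFc.continuousOn
  have hx1q : F x1 ≤ F q := hmin ⟨hpq, hqr⟩
  set S := Set.Icc p r ∩ F ⁻¹' {F x1}
  have hS : IsCompact S := isCompact_Icc.inter_right (isClosed_singleton.preimage hFc)
  have hSn : S.Nonempty := ⟨x1, hx1, rfl⟩
  have h0 := hS.sInf_mem hSn
  set x0 := sInf S
  have hx0v : F x0 = F x1 := h0.2
  have hp0 : F p = 0 := by simp only [hF]; ring
  have hr0 : F r = 0 := by simp only [hF]; ring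
  have hpx : p < x0 := lt_of_le_of_ne h0.1.1 (fun h => by rw [← h, hp0] at hx0v; linarith)
  have hxr : x0 < r := lt_of_le_of_ne h0.1.2 (fun h => by rw [h, hr0] at hx0v; linarith)
  set d := min (x0 - p) (r - x0)
  have hd : 0 < d := lt_min (by linarith) (by linarith)
  have hd1 : d ≤ x0 - p := min_le_left _ _
  have hd2 : d ≤ r - x0 := min_le_right _ _
  have hm : x0 - d ∈ Set.Icc p r := ⟨by linarith, by linarith⟩
  have hM : x0 + d ∈ Set.Icc p r := ⟨by linarith, by linarith⟩
  have a1 : F x1 < F (x0 - d) := by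
    refine lt_of_le_of_ne (hmin hm) (fun h => ?_)
    have : x0 ≤ x0 - d := csInf_le hS.bddBelow ⟨hm, h.symm⟩
    linarith
  have a2 : F x1 ≤ F (x0 + d) := hmin hM
  have a3 := hw (x0 - d) x0 d (by linarith) hd.le
  rw [sub_add_cancel] at a3
  have a4 : F (x0 + d) - F x0 ≤ F x0 - F (x0 - d) := by
    simp only [hF]
    have := mul_le_mul_of_nonneg_left a3 (by linarith : 0 ≤ r - p)
    linarith
  linarith

lemma MM_concave (hf : PF f) (t : ℝ) {p q r : ℝ} (hpq : p ≤ q) (hqr : q ≤ r) :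
    (r - q) * MM f t p + (q - p) * MM f t r ≤ (r - p) * MM f t q :=
  concave_of_wright (MM_cont hf t) (fun _ _ _ h1 h2 => MM_wright hf t h1 h2) hpq hqr

/-- total integral of `HH`. -/
lemma HH_int (hf : PF f) (l : ℝ) :
    ∫ y in (0:ℝ)..(2 * π), HH f l y = l * ∫ z in (0:ℝ)..(2 * π), f z := by
  have hc := hf.cont
  simp only [HH_eq hf]
  set β : ℝ → ℝ := fun x => ∫ z in (0:ℝ)..x, f z with hβ
  have hi : ∀ a b, IntervalIntegrable β volume a b := fun a b => hc.intervalIntegrable a b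
  have hi2 : IntervalIntegrable (fun y => β (y + l)) volume 0 (2 * π) :=
    (hc.comp (continuous_id.add continuous_const)).intervalIntegrable _ _
  change ∫ y in (0:ℝ)..(2 * π), (β (y + l) - β y) = _
  rw [intervalIntegral.integral_sub hi2 (hi _ _)]
  have e1 : ∫ y in (0:ℝ)..(2 * π), β (y + l) = ∫ y in (0 + l)..(2 * π + l), β y :=
    intervalIntegral.integral_comp_add_right β l
  have e2 : ∫ y in (0:ℝ)..l, β (y + 2 * π) = ∫ y in (0 + 2 * π)..(l + 2 * π), β y :=
    intervalIntegral.integral_comp_add_right β (2 * π)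
  have e3 : ∀ y, β (y + 2 * π) = β y + ∫ z in (0:ℝ)..(2 * π), f z := by
    intro y
    rw [hβ]
    simp only
    rw [← hf.int_add 0 y (y + 2 * π), hf.int_period]
  simp only [e3] at e2
  rw [intervalIntegral.integral_add (hi _ _) intervalIntegrable_const,
    intervalIntegral.integral_const] at e2
  rw [e1]
  have a1 := intervalIntegral.integral_add_adjacent_intervals (hi 0 l) (hi l (2 * π + l))
  have a2 := intervalIntegral.integral_add_adjacent_intervals (hi 0 (2 * π)) (hi (2 * π) (2 * π + l))
  rw [zero_add] at *
  rw [add_comm l (2 * π)] at e2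
  simp only [smul_eq_mul, sub_zero] at e2
  linarith

lemma MM_at_t (hf : PF f) {t : ℝ} (ht : 0 ≤ t) : MM f t t = t * ∫ z in (0:ℝ)..(2 * π), f z := by
  rw [← HH_int hf t, MM]
  congr 1; ext y
  exact min_eq_left (HH_le hf ht y)

lemma HH_lower (hf : PF f) {l : ℝ} (hl : l ≤ 2 * π) (y : ℝ) :
    (∫ z in (0:ℝ)..(2 * π), f z) - (2 * π - l) ≤ HH f l y := by
  have h := hf.int_add y (y + l) (y + 2 * π)
  rw [hf.int_period] at h
  have := hf.int_le (a := y + l) (b := y + 2 * π) (by linarith)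
  rw [HH]; linarith

lemma MM_at_L (hf : PF f) {t : ℝ} (h2 : t ≤ ∫ z in (0:ℝ)..(2 * π), f z) :
    MM f t (2 * π + t - ∫ z in (0:ℝ)..(2 * π), f z) = 2 * π * t := by
  rw [MM]
  have : ∀ y, min (HH f (2 * π + t - ∫ z in (0:ℝ)..(2 * π), f z) y) t = t := by
    intro y
    apply min_eq_right
    have := HH_lower hf (l := 2 * π + t - ∫ z in (0:ℝ)..(2 * π), f z) (by linarith) y
    linarith
  simp [this]

lemma mass_le (hf : PF f) : ∫ z in (0:ℝ)..(2 * π), f z ≤ 2 * π := by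
  have := hf.int_le (a := 0) (b := 2 * π) (by positivity)
  simpa using this

/-- the key chord estimate -/
lemma MM_lower (hf : PF f) {t l : ℝ} (ht : 0 ≤ t) (htl : t ≤ l)
    (htA : t ≤ ∫ z in (0:ℝ)..(2 * π), f z) (hl : l ≤ 2 * π + t - ∫ z in (0:ℝ)..(2 * π), f z) :
    t * ((∫ z in (0:ℝ)..(2 * π), f z) + l - t) ≤ MM f t l := by
  have h := MM_concave hf t htl hl
  rw [MM_at_t hf ht, MM_at_L hf htA] at h
  have hA := mass_le hf
  have h0 := MM_at_t hf ht
  generalize (∫ z in (0:ℝ)..(2 * π), f z) = A at *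
  rcases hA.lt_or_eq with hA | hA
  · have : 0 < 2 * π - A := by linarith
    have h' : (2 * π - A) * (t * (A + l - t)) ≤ (2 * π - A) * MM f t l := by nlinarith
    exact le_of_mul_le_mul_left h' this
  · have : l = t := by linarith
    subst this
    rw [h0]; apply le_of_eq; ring
end



noncomputable def NN (f g : ℝ → ℝ) (ρ : ℝ) : ℝ :=
  ∫ y in (0:ℝ)..(2 * π), (1 - g y) * HH f (2 * ρ) (y - ρ)

/-- periodic arc of half-length `a` centred at `0` -/
noncomputable def arc (a x : ℝ) : ℝ :=
  if |x - 2 * π * (⌊(x + π) / (2 * π)⌋ : ℝ)| < a then 1 else 0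

section
variable {f g : ℝ → ℝ}

lemma ii_mul (hg : PF g) {h : ℝ → ℝ} (hh : Continuous h) (a b : ℝ) :
    IntervalIntegrable (fun y => g y * h y) volume a b :=
  (hg.ii a b).mul_continuousOn hh.continuousOn

lemma HHs_cont (hf : PF f) (ρ : ℝ) : Continuous fun y => HH f (2 * ρ) (y - ρ) :=
  (HH_cont_y hf _).comp (continuous_id.sub continuous_const)

lemma NN_id (hf : PF f) (hg : PF g) (ρ t : ℝ) :
    NN f g ρ = MM f t (2 * ρ) - t * (∫ y in (0:ℝ)..(2 * π), g y)
      + (∫ y in (0:ℝ)..(2 * π), (1 - g y) * (HH f (2 * ρ) (y - ρ) - min (HH f (2 * ρ) (y - ρ)) t))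
      + ∫ y in (0:ℝ)..(2 * π), g y * (t - min (HH f (2 * ρ) (y - ρ)) t) := by
  rw [MM_shift hf t (2 * ρ) ρ, NN]
  have hc := HHs_cont hf ρ
  have hcm : Continuous fun y => min (HH f (2 * ρ) (y - ρ)) t := hc.min continuous_const
  have i1 : IntervalIntegrable (fun y => min (HH f (2 * ρ) (y - ρ)) t) volume 0 (2 * π) :=
    hcm.intervalIntegrable _ _
  have i2 : IntervalIntegrable (fun y => t * g y) volume 0 (2 * π) := (hg.ii _ _).const_mul t
  have i3 : IntervalIntegrable (fun y => (1 - g y) *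
      (HH f (2 * ρ) (y - ρ) - min (HH f (2 * ρ) (y - ρ)) t)) volume 0 (2 * π) :=
    (intervalIntegrable_const.sub (hg.ii _ _)).mul_continuousOn (hc.sub hcm).continuousOn
  have i4 : IntervalIntegrable (fun y => g y * (t - min (HH f (2 * ρ) (y - ρ)) t)) volume 0
      (2 * π) := ii_mul hg (continuous_const.sub hcm) 0 (2 * π)
  rw [← intervalIntegral.integral_const_mul, ← intervalIntegral.integral_sub i1 i2,
    ← intervalIntegral.integral_add (i1.sub i2) i3,
    ← intervalIntegral.integral_add ((i1.sub i2).add i3) i4]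
  congr 1; ext y; ring

lemma NN_ext1 (hg : PF g) (ρ t : ℝ) : 0 ≤
    ∫ y in (0:ℝ)..(2 * π), (1 - g y) * (HH f (2 * ρ) (y - ρ) - min (HH f (2 * ρ) (y - ρ)) t) := by
  apply intervalIntegral.integral_nonneg (by positivity)
  intro y _
  exact mul_nonneg (by linarith [hg.le_one y]) (by linarith [min_le_left (HH f (2 * ρ) (y - ρ)) t])

lemma NN_ext2 (hg : PF g) (ρ t : ℝ) : 0 ≤
    ∫ y in (0:ℝ)..(2 * π), g y * (t - min (HH f (2 * ρ) (y - ρ)) t) := by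
  apply intervalIntegral.integral_nonneg (by positivity)
  intro y _
  exact mul_nonneg (by linarith [hg.nonneg y]) (by linarith [min_le_right (HH f (2 * ρ) (y - ρ)) t])

lemma NN_nonneg (hf : PF f) (hg : PF g) {ρ : ℝ} (hρ : 0 ≤ ρ) : 0 ≤ NN f g ρ := by
  apply intervalIntegral.integral_nonneg (by positivity)
  intro y _
  exact mul_nonneg (by linarith [hg.le_one y]) (HH_nonneg hf (by linarith) _)

lemma NN_lower (hf : PF f) (hg : PF g) {a b ρ t : ℝ} (ha : ∫ y in (0:ℝ)..(2 * π), f y = 2 * a)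
    (hb : ∫ y in (0:ℝ)..(2 * π), g y = 2 * b) (ht : 0 ≤ t) (h1 : t ≤ 2 * ρ) (h2 : t ≤ 2 * a)
    (h3 : 2 * ρ ≤ 2 * π + t - 2 * a) : t * (2 * a + 2 * ρ - t - 2 * b) ≤ NN f g ρ := by
  rw [NN_id hf hg ρ t, hb]
  have := MM_lower hf ht h1 (by rwa [ha]) (by rwa [ha])
  rw [ha] at this
  have := NN_ext1 (f := f) hg ρ t
  have := NN_ext2 (f := f) hg ρ t
  linarith

end

lemma arc_floor {x : ℝ} (h1 : -π ≤ x) (h2 : x < π) : ⌊(x + π) / (2 * π)⌋ = 0 := by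
  have := pi_pos
  rw [Int.floor_eq_iff]
  constructor
  · simp; apply div_nonneg <;> linarith
  · simp; rw [div_lt_one (by positivity)]; linarith

lemma arc_per (a : ℝ) : Function.Periodic (arc a) (2 * π) := by
  intro x
  have hp := pi_pos
  have : (x + 2 * π + π) / (2 * π) = (x + π) / (2 * π) + 1 := by field_simp; ring
  unfold arc
  rw [this, Int.floor_add_one]
  push_cast
  congr 3; ring_nf

lemma arc_PF (a : ℝ) : PF (arc a) where
  meas := by
    unfold arc
    refine Measurable.ite ?_ measurable_const measurable_const
    refine measurableSet_lt ?_ measurable_const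
    have : Measurable fun x : ℝ => ((⌊(x + π) / (2 * π)⌋ : ℤ) : ℝ) :=
      (measurable_from_top (f := fun n : ℤ => (n:ℝ))).comp
        (Int.measurable_floor.comp ((measurable_id.add_const π).div_const (2 * π)))
    exact ((measurable_id.sub (this.const_mul (2 * π)))).abs
  per := arc_per a
  zo x := by unfold arc; split_ifs <;> simp

lemma arc_eq {a x : ℝ} (h1 : -π ≤ x) (h2 : x < π) : arc a x = if |x| < a then 1 else 0 := by
  simp [arc, arc_floor h1 h2]

lemma arc_eq' {a x : ℝ} (h1 : π ≤ x) (h2 : x < 3 * π) :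
    arc a x = if |x - 2 * π| < a then 1 else 0 := by
  rw [← arc_eq (by linarith) (by linarith)]
  exact ((arc_per a).sub_eq x).symm

lemma int_one_of {f : ℝ → ℝ} {a b : ℝ} (hab : a ≤ b) (h : ∀ x ∈ Set.Ioo a b, f x = 1) :
    ∫ x in a..b, f x = b - a := by
  rw [intervalIntegral.integral_of_le hab, integral_Ioc_eq_integral_Ioo,
    setIntegral_congr_fun measurableSet_Ioo h]
  simp [hab]

lemma int_zero_of {f : ℝ → ℝ} {a b : ℝ} (hab : a ≤ b) (h : ∀ x ∈ Set.Ioo a b, f x = 0) :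
    ∫ x in a..b, f x = 0 := by
  rw [intervalIntegral.integral_of_le hab, integral_Ioc_eq_integral_Ioo,
    setIntegral_congr_fun measurableSet_Ioo h]
  simp

noncomputable def cl (a x : ℝ) : ℝ := max (-a) (min x a)

lemma arc_prim1 {a x : ℝ} (ha : 0 ≤ a) (hx : -π ≤ x) (hx' : x ≤ π) :
    ∫ z in (0:ℝ)..x, arc a z = cl a x := by
  have hf := arc_PF a
  unfold cl
  rcases le_total 0 x with h0 | h0
  · rcases le_total x a with h | h
    · rw [int_one_of h0, min_eq_left h, max_eq_right (by linarith)]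
      · ring
      · intro z hz
        rw [arc_eq (by linarith [hz.1, pi_pos]) (by linarith [hz.2]), if_pos]
        rw [abs_of_pos hz.1]; linarith [hz.2]
    · rw [← hf.int_add 0 a x, int_one_of ha, int_zero_of h, min_eq_right h,
        max_eq_right (by linarith)]
      · ring
      · intro z hz
        rw [arc_eq (by linarith [hz.1, pi_pos]) (by linarith [hz.2]), if_neg]
        rw [not_lt, abs_of_pos (by linarith [hz.1])]; linarith [hz.1]
      · intro z hz
        rw [arc_eq (by linarith [hz.1, pi_pos]) (by linarith [hz.2]), if_pos]
        rw [abs_of_pos hz.1]; linarith [hz.2]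
  · rw [intervalIntegral.integral_symm]
    rcases le_total (-a) x with h | h
    · rw [int_one_of h0, min_eq_left (by linarith), max_eq_right (by linarith)]
      · ring
      · intro z hz
        rw [arc_eq (by linarith [hz.1, pi_pos]) (by linarith [hz.2]), if_pos]
        rw [abs_of_neg hz.2]; linarith [hz.1]
    · rw [← hf.int_add x (-a) 0, int_zero_of h, int_one_of (by linarith),
        min_eq_left (by linarith), max_eq_left (by linarith)]
      · ring
      · intro z hz
        rw [arc_eq (by linarith [hz.1, pi_pos]) (by linarith [hz.2]), if_pos]
        rw [abs_of_neg hz.2]; linarith [hz.1]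
      · intro z hz
        rw [arc_eq (by linarith [hz.1, pi_pos]) (by linarith [hz.2]), if_neg]
        rw [not_lt, abs_of_neg (by linarith [hz.2])]; linarith [hz.2]

lemma arc_mass {a : ℝ} (ha : 0 ≤ a) (ha' : a ≤ π) : ∫ z in (0:ℝ)..(2 * π), arc a z = 2 * a := by
  rw [← (arc_PF a).int_period (-π), ← (arc_PF a).int_add (-π) 0, intervalIntegral.integral_symm,
    arc_prim1 ha le_rfl (by linarith [pi_pos]), arc_prim1 ha (by linarith) (by linarith)]
  unfold cl
  rw [min_eq_left (by linarith), max_eq_left (by linarith), min_eq_right (by linarith),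
    max_eq_right (by linarith)]; ring

lemma arc_prim {a x : ℝ} (ha : 0 ≤ a) (ha' : a ≤ π) (hx : -π ≤ x) (hx' : x ≤ 3 * π) :
    ∫ z in (0:ℝ)..x, arc a z = cl a x + cl a (x - 2 * π) + a := by
  have hf := arc_PF a
  rcases le_total x π with h | h
  · rw [arc_prim1 ha hx h]
    have : cl a (x - 2 * π) = -a := by
      unfold cl; rw [min_eq_left (by linarith), max_eq_left (by linarith)]
    rw [this]; ring
  · have e := hf.int_add 0 (x - 2 * π) (x - 2 * π + 2 * π)
    rw [hf.int_period, arc_mass ha ha', arc_prim1 ha (by linarith) (by linarith),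
      sub_add_cancel] at e
    have : cl a x = a := by
      unfold cl; rw [min_eq_right (by linarith), max_eq_right (by linarith)]
    rw [this, ← e]; ring

lemma cl_mono {a x y : ℝ} (h : x ≤ y) : cl a x ≤ cl a y :=
  max_le_max le_rfl (min_le_min h le_rfl)

lemma arc_H {a ρ y : ℝ} (ha : 0 ≤ a) (ha' : a ≤ π) (hρ : 0 ≤ ρ) (hρ' : ρ ≤ π)
    (hy : 0 ≤ y) (hy' : y ≤ 2 * π) : HH (arc a) (2 * ρ) (y - ρ) =
    (cl a (y + ρ) - cl a (y - ρ)) + (cl a (y - 2 * π + ρ) - cl a (y - 2 * π - ρ)) := by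
  rw [HH_eq (arc_PF a), arc_prim ha ha' (by linarith) (by linarith),
    arc_prim ha ha' (by linarith) (by linarith)]
  ring_nf

lemma cl_le {a ρ y : ℝ} (ha : 0 ≤ a) : cl a (y + ρ) - cl a (y - ρ) ≤ max (a + ρ - y) 0 := by
  have h1 : cl a (y + ρ) ≤ a := by unfold cl; exact max_le (by linarith) (min_le_right _ _)
  have h2 : min (y - ρ) a ≤ cl a (y - ρ) := le_max_right _ _
  rcases min_cases (y - ρ) a with h | h
  · exact le_trans (by linarith) (le_max_left _ _)
  · exact le_trans (by linarith) (le_max_right _ _)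

lemma cl_le' {a ρ y : ℝ} : cl a (y + ρ) - cl a (y - ρ) ≤ max (a + ρ + y) 0 := by
  have h1 : -a ≤ cl a (y - ρ) := by unfold cl; exact le_max_left _ _
  have h2 : cl a (y + ρ) ≤ max (-a) (y + ρ) := max_le_max le_rfl (min_le_left _ _)
  rcases max_cases (-a) (y + ρ) with h | h
  · exact le_trans (by linarith) (le_max_right _ _)
  · exact le_trans (by linarith) (le_max_left _ _)

lemma cl_ge {a ρ y : ℝ} :
    min (min (2 * a) (2 * ρ)) (a + ρ - |y|) ≤ cl a (y + ρ) - cl a (y - ρ) := by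
  have h1 := min_le_left (min (2 * a) (2 * ρ)) (a + ρ - |y|)
  have h2 := min_le_right (min (2 * a) (2 * ρ)) (a + ρ - |y|)
  have h3 := min_le_left (2 * a) (2 * ρ)
  have h4 := min_le_right (2 * a) (2 * ρ)
  have h5 := le_abs_self y
  have h6 := neg_abs_le y
  unfold cl
  rcases max_cases (-a) (min (y + ρ) a) with h | h <;>
  rcases max_cases (-a) (min (y - ρ) a) with h' | h' <;>
  rcases min_cases (y + ρ) a with k | k <;>
  rcases min_cases (y - ρ) a with k' | k' <;> linarith

lemma arc_H_le {a ρ y : ℝ} (ha : 0 ≤ a) (ha' : a ≤ π) (hρ : 0 ≤ ρ) (hρ' : ρ ≤ π)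
    (hy : 0 ≤ y) (hy' : y ≤ 2 * π) : HH (arc a) (2 * ρ) (y - ρ) ≤
    max (a + ρ - y) 0 + max (a + ρ + (y - 2 * π)) 0 := by
  rw [arc_H ha ha' hρ hρ' hy hy']
  exact add_le_add (cl_le ha) cl_le'

lemma arc_H_ge {a ρ y : ℝ} (ha : 0 ≤ a) (ha' : a ≤ π) (hρ : 0 ≤ ρ) (hρ' : ρ ≤ π)
    (hy : 0 ≤ y) (hy' : y ≤ 2 * π) :
    min (min (2 * a) (2 * ρ)) (a + ρ - |y|) ≤ HH (arc a) (2 * ρ) (y - ρ) := by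
  rw [arc_H ha ha' hρ hρ' hy hy']
  have := cl_ge (a := a) (ρ := ρ) (y := y)
  have := cl_mono (a := a) (by linarith : y - 2 * π - ρ ≤ y - 2 * π + ρ)
  linarith

lemma arc_H_ge' {a ρ y : ℝ} (ha : 0 ≤ a) (ha' : a ≤ π) (hρ : 0 ≤ ρ) (hρ' : ρ ≤ π)
    (hy : 0 ≤ y) (hy' : y ≤ 2 * π) :
    min (min (2 * a) (2 * ρ)) (a + ρ - |y - 2 * π|) ≤ HH (arc a) (2 * ρ) (y - ρ) := by
  rw [arc_H ha ha' hρ hρ' hy hy']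
  have := cl_ge (a := a) (ρ := ρ) (y := y - 2 * π)
  have := cl_mono (a := a) (by linarith : y - ρ ≤ y + ρ)
  linarith

lemma arc_zero {b y : ℝ} (h1 : b < y) (h2 : y < 2 * π - b) (hb : 0 ≤ b) : arc b y = 0 := by
  rcases lt_or_ge y π with h | h
  · rw [arc_eq (by linarith [pi_pos]) h, if_neg]
    rw [abs_of_nonneg (by linarith)]; linarith
  · rw [arc_eq' h (by linarith [pi_pos]), if_neg]
    rw [abs_of_nonpos (by linarith)]; linarith

lemma arc_one {b y : ℝ} (h1 : 0 ≤ y) (h2 : y < b) (hb : b ≤ π) : arc b y = 1 := by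
  rw [arc_eq (by linarith [pi_pos]) (by linarith), if_pos]
  rwa [abs_of_nonneg h1]

lemma arc_one' {b y : ℝ} (h1 : 2 * π - b < y) (h2 : y < 2 * π) (hb : b ≤ π) : arc b y = 1 := by
  rw [arc_eq' (by linarith [pi_pos]) (by linarith [pi_pos]), if_pos]
  rw [abs_of_nonpos (by linarith)]; linarith

lemma NN_arc {f : ℝ → ℝ} (hf : PF f) {b : ℝ} (hb : 0 ≤ b) (hb' : b ≤ π) (ρ : ℝ) :
    NN f (arc b) ρ = ∫ y in b..(2 * π - b), HH f (2 * ρ) (y - ρ) := by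
  have hi : ∀ p q, IntervalIntegrable (fun y => (1 - arc b y) * HH f (2 * ρ) (y - ρ)) volume p q :=
    fun p q => (intervalIntegrable_const.sub ((arc_PF b).ii _ _)).mul_continuousOn
      (HHs_cont hf ρ).continuousOn
  rw [NN, ← intervalIntegral.integral_add_adjacent_intervals (hi 0 b) (hi b (2 * π)),
    ← intervalIntegral.integral_add_adjacent_intervals (hi b (2 * π - b)) (hi _ (2 * π)),
    int_zero_of hb, int_zero_of (by linarith : 2 * π - b ≤ 2 * π), zero_add, add_zero]
  · rw [intervalIntegral.integral_of_le (by linarith), intervalIntegral.integral_of_le (by linarith),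
      integral_Ioc_eq_integral_Ioo, integral_Ioc_eq_integral_Ioo]
    apply setIntegral_congr_fun measurableSet_Ioo
    intro y hy
    simp only
    rw [arc_zero hy.1 hy.2 hb]; ring
  · intro y hy
    rw [arc_one' hy.1 hy.2 hb']; ring
  · intro y hy
    rw [arc_one hy.1.le hy.2 hb']; ring

lemma int_max1 {b c d : ℝ} (h1 : b ≤ c) (h2 : c ≤ d) :
    ∫ y in b..d, max (c - y) 0 = (c - b) ^ 2 / 2 := by
  have hi : ∀ p q, IntervalIntegrable (fun y => max (c - y) 0) volume p q :=
    fun p q => (by fun_prop : Continuous fun y : ℝ => max (c - y) 0).intervalIntegrable p q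
  rw [← intervalIntegral.integral_add_adjacent_intervals (hi b c) (hi c d), int_zero_of h2]
  · have : ∫ y in b..c, max (c - y) 0 = ∫ y in b..c, (c - y) := by
      apply intervalIntegral.integral_congr
      intro y hy
      rw [Set.uIcc_of_le h1] at hy
      exact max_eq_left (by linarith [hy.2])
    rw [this, intervalIntegral.integral_sub intervalIntegrable_const (by simp), integral_id]
    simp; ring
  · intro y hy
    exact max_eq_right (by linarith [hy.1])

lemma int_max2 {b c : ℝ} (h1 : b ≤ c) (h2 : c ≤ 2 * π - b) :
    ∫ y in b..(2 * π - b), max (c + (y - 2 * π)) 0 = (c - b) ^ 2 / 2 := by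
  rw [← int_max1 h1 h2]
  have := intervalIntegral.integral_comp_sub_left (a := b) (b := 2 * π - b)
    (fun y => max (c - y) 0) (2 * π)
  rw [show 2 * π - (2 * π - b) = b by ring] at this
  rw [← this]
  congr 1; ext y; congr 1; ring

/-- Riesz inequality on the circle for an arc kernel. -/
lemma riesz {f g : ℝ → ℝ} (hf : PF f) (hg : PF g) {a b ρ : ℝ}
    (ha : ∫ y in (0:ℝ)..(2 * π), f y = 2 * a)
    (hb : ∫ y in (0:ℝ)..(2 * π), g y = 2 * b) (hρ : 0 ≤ ρ) (hρ' : ρ ≤ π) :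
    NN (arc a) (arc b) ρ ≤ NN f g ρ := by
  have hp := pi_pos
  have a0 : 0 ≤ a := by have := hf.int_nonneg (a := 0) (b := 2 * π) (by positivity); linarith
  have b0 : 0 ≤ b := by have := hg.int_nonneg (a := 0) (b := 2 * π) (by positivity); linarith
  have a1 : a ≤ π := by have := mass_le hf; linarith
  have b1 : b ≤ π := by have := mass_le hg; linarith
  have hA := arc_PF a
  have hle : ∀ y ∈ Set.Icc b (2 * π - b), HH (arc a) (2 * ρ) (y - ρ) ≤
      max (a + ρ - y) 0 + max (a + ρ + (y - 2 * π)) 0 := fun y hy =>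
    arc_H_le a0 a1 hρ hρ' (by linarith [hy.1]) (by linarith [hy.2])
  have hc := HHs_cont hA ρ
  have hi : ∀ p q, IntervalIntegrable (fun y => HH (arc a) (2 * ρ) (y - ρ)) volume p q :=
    fun p q => hc.intervalIntegrable p q
  have hbb : b ≤ 2 * π - b := by linarith
  rw [NN_arc hA b0 b1]
  rcases le_or_gt (a + ρ) b with h1 | h1
  · refine le_trans ?_ (NN_nonneg hf hg hρ)
    have := intervalIntegral.integral_mono_on hbb (hi _ _)
      (intervalIntegrable_const (c := (0:ℝ))) (fun y hy => by
        have := hle y hy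
        rwa [max_eq_right (by linarith [hy.1]), max_eq_right (by linarith [hy.2]), add_zero] at this)
    simpa using this
  rcases le_or_gt (2 * π - b) (a + ρ) with h2 | h2
  · have l := NN_lower hf hg ha hb (t := 2 * (a + ρ) - 2 * π) (ρ := ρ) (by linarith) (by linarith)
      (by linarith) (by linarith)
    refine le_trans ?_ l
    have := intervalIntegral.integral_mono_on hbb (hi _ _)
      (intervalIntegrable_const (c := (2 * (a + ρ) - 2 * π))) (fun y hy => by
        have := hle y hy
        rw [max_eq_left (by linarith [hy.2]), max_eq_left (by linarith [hy.1])] at this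
        linarith)
    refine this.trans (le_of_eq ?_)
    simp; ring
  have htot := HH_int hA (2 * ρ)
  have htot2 : ∫ y in (0:ℝ)..(2 * π), HH (arc a) (2 * ρ) (y - ρ) = 2 * ρ * (2 * a) := by
    rw [← arc_mass a0 a1, ← htot, intervalIntegral.integral_comp_sub_right]
    have := (HH_per hA (2 * ρ)).intervalIntegral_add_eq (0 - ρ) 0
    rw [zero_add] at this
    rw [← this]; congr 1; ring
  rw [← intervalIntegral.integral_add_adjacent_intervals (hi 0 b) (hi b (2 * π)),
    ← intervalIntegral.integral_add_adjacent_intervals (hi b (2 * π - b)) (hi _ (2 * π))] at htot2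
  -- lower bound on the complement
  have hlow : ∀ K : ℝ, K ≤ 2 * a → K ≤ 2 * ρ → K ≤ a + ρ - b →
      ∫ y in b..(2 * π - b), HH (arc a) (2 * ρ) (y - ρ) ≤ 2 * ρ * (2 * a) - K * (2 * b) := by
    intro K k1 k2 k3
    have l1 := intervalIntegral.integral_mono_on b0 (intervalIntegrable_const (c := K)) (hi _ _)
      (fun y hy => (by
        refine le_trans ?_ (arc_H_ge a0 a1 hρ hρ' hy.1 (by linarith [hy.2]))
        rw [abs_of_nonneg hy.1]
        exact le_min (le_min k1 k2) (by linarith [hy.2])))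
    have l2 := intervalIntegral.integral_mono_on (by linarith : 2 * π - b ≤ 2 * π)
      (intervalIntegrable_const (c := K)) (hi _ _)
      (fun y hy => (by
        refine le_trans ?_ (arc_H_ge' a0 a1 hρ hρ' (by linarith [hy.1]) hy.2)
        rw [abs_of_nonpos (by linarith [hy.2])]
        exact le_min (le_min k1 k2) (by linarith [hy.1])))
    simp only [intervalIntegral.integral_const, smul_eq_mul] at l1 l2
    linarith
  rcases le_or_gt (a + b) ρ with h3 | h3
  · have l := NN_lower hf hg ha hb (t := 2 * a) (ρ := ρ) (by linarith) (by linarith)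
      (by linarith) (by linarith)
    refine le_trans ?_ l
    refine (hlow (2 * a) le_rfl (by linarith) (by linarith)).trans (le_of_eq (by ring))
  rcases le_or_gt (ρ + b) a with h4 | h4
  · have l := NN_lower hf hg ha hb (t := 2 * ρ) (ρ := ρ) (by linarith) (by linarith)
      (by linarith) (by linarith)
    refine le_trans ?_ l
    refine (hlow (2 * ρ) (by linarith) le_rfl (by linarith)).trans (le_of_eq (by ring))
  · have l := NN_lower hf hg ha hb (t := a + ρ - b) (ρ := ρ) (by linarith) (by linarith)
      (by linarith) (by linarith)
    refine le_trans ?_ l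
    have i1 : IntervalIntegrable (fun y => max (a + ρ - y) 0) volume b (2 * π - b) :=
      (by fun_prop : Continuous fun y : ℝ => max (a + ρ - y) 0).intervalIntegrable _ _
    have i2 : IntervalIntegrable (fun y => max (a + ρ + (y - 2 * π)) 0) volume b (2 * π - b) :=
      (by fun_prop : Continuous fun y : ℝ => max (a + ρ + (y - 2 * π)) 0).intervalIntegrable _ _
    have := intervalIntegral.integral_mono_on hbb (hi _ _) (i1.add i2) hle
    rw [intervalIntegral.integral_add i1 i2, int_max1 h1.le h2.le, int_max2 h1.le h2.le] at this
    refine this.trans (le_of_eq (by ring))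



lemma ae_shift {P : ℝ → Prop} (h : ∀ᵐ x : ℝ, P x) (c : ℝ) : ∀ᵐ x : ℝ, P (x + c) :=
  (measurePreserving_add_right volume c).quasiMeasurePreserving.ae h

lemma ae_of_per {P : ℝ → Prop} (hP : ∀ x, P (x + 2 * π) ↔ P x) (c : ℝ)
    (h : ∀ᵐ x : ℝ, x ∈ Set.Ioc c (c + 2 * π) → P x) : ∀ᵐ x : ℝ, P x := by
  have hper : Function.Periodic P (2 * π) := fun x => propext (hP x)
  have h1 : ∀ᵐ x : ℝ, ∀ k : ℤ, x + k • (2 * π) ∈ Set.Ioc c (c + 2 * π) → P (x + k • (2 * π)) :=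
    ae_all_iff.2 fun k => ae_shift h _
  filter_upwards [h1] with x hx
  obtain ⟨k, hk, -⟩ := existsUnique_add_zsmul_mem_Ioc two_pi_pos x c
  have := hx k hk
  rwa [hper.zsmul k x] at this

lemma PF.shift {f : ℝ → ℝ} (hf : PF f) (c : ℝ) : PF fun x => f (x + c) where
  meas := hf.meas.comp (measurable_id.add_const c)
  per := fun x => by
    show f (x + 2 * π + c) = f (x + c)
    rw [add_right_comm]; exact hf.per _
  zo := fun x => hf.zo _

lemma HH_shift (f : ℝ → ℝ) (c l y : ℝ) : HH (fun x => f (x + c)) l y = HH f l (y + c) := by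
  unfold HH
  rw [intervalIntegral.integral_comp_add_right]; congr 1; ring

lemma HH_congr {f f' : ℝ → ℝ} (h : f =ᵐ[volume] f') (l y : ℝ) : HH f l y = HH f' l y :=
  intervalIntegral.integral_congr_ae (by filter_upwards [h] with x hx _ using hx)

lemma NN_congr {f f' g g' : ℝ → ℝ} (h : f =ᵐ[volume] f') (h' : g =ᵐ[volume] g') (ρ : ℝ) :
    NN f g ρ = NN f' g' ρ := by
  apply intervalIntegral.integral_congr_ae
  filter_upwards [h'] with x hx _
  rw [hx, HH_congr h]

lemma NN_shift {f g : ℝ → ℝ} (hf : PF f) (hg : PF g) (c ρ : ℝ) :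
    NN (fun x => f (x + c)) (fun x => g (x + c)) ρ = NN f g ρ := by
  unfold NN
  simp only [HH_shift]
  have hp : Function.Periodic (fun y => (1 - g y) * HH f (2 * ρ) (y - ρ)) (2 * π) := by
    intro y
    show (1 - g (y + 2 * π)) * HH f (2 * ρ) (y + 2 * π - ρ) = _
    rw [hg.per y, show y + 2 * π - ρ = (y - ρ) + 2 * π by ring, HH_per hf _ (y - ρ)]
  have h1 := intervalIntegral.integral_comp_add_right (a := 0) (b := 2 * π)
    (fun y => (1 - g y) * HH f (2 * ρ) (y - ρ)) c
  have h2 := hp.intervalIntegral_add_eq (0 + c) 0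
  rw [zero_add (2 * π)] at h2
  rw [← h2, show 0 + c + 2 * π = 2 * π + c by ring, ← h1]
  congr 1; ext y; congr 2; ring

lemma mass_shift {f : ℝ → ℝ} (hf : PF f) (c : ℝ) :
    ∫ y in (0:ℝ)..(2 * π), f (y + c) = ∫ y in (0:ℝ)..(2 * π), f y := by
  rw [intervalIntegral.integral_comp_add_right, ← hf.int_period c]; congr 1 <;> ring

lemma step1 {f g : ℝ → ℝ} (hf : PF f) (hg : PF g) {a b t : ℝ}
    (ha : ∫ y in (0:ℝ)..(2 * π), f y = 2 * a)
    (hb : ∫ y in (0:ℝ)..(2 * π), g y = 2 * b) (h0 : 0 < t) (h1 : t ≤ 2 * a) (h2 : t < π - b)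
    (hab : a ≤ b) (hN : NN f g (b - a + t) ≤ NN (arc a) (arc b) (b - a + t)) :
    MM f t (2 * (b - a + t)) = t * (2 * a + 2 * (b - a + t) - t) ∧
    (∫ y in (0:ℝ)..(2 * π), (1 - g y) * (HH f (2 * (b - a + t)) (y - (b - a + t))
      - min (HH f (2 * (b - a + t)) (y - (b - a + t))) t)) = 0 ∧
    (∫ y in (0:ℝ)..(2 * π), g y * (t - min (HH f (2 * (b - a + t)) (y - (b - a + t))) t)) = 0 := by
  have hp := pi_pos
  have hA := arc_PF a
  have b0 : 0 ≤ b := by linarith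
  have b1 : b ≤ π := by linarith
  have key : NN (arc a) (arc b) (b - a + t) ≤ t ^ 2 := by
    rw [NN_arc hA b0 b1]
    set ρ := b - a + t with hρ
    have i1 : IntervalIntegrable (fun y => max (a + ρ - y) 0) volume b (2 * π - b) :=
      (by fun_prop : Continuous fun y : ℝ => max (a + ρ - y) 0).intervalIntegrable _ _
    have i2 : IntervalIntegrable (fun y => max (a + ρ + (y - 2 * π)) 0) volume b (2 * π - b) :=
      (by fun_prop : Continuous fun y : ℝ => max (a + ρ + (y - 2 * π)) 0).intervalIntegrable _ _
    have := intervalIntegral.integral_mono_on (by linarith : b ≤ 2 * π - b)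
      ((HHs_cont hA ρ).intervalIntegrable _ _) (i1.add i2)
      (fun y hy => arc_H_le (by linarith) (by linarith) (by linarith) (by linarith)
        (by linarith [hy.1]) (by linarith [hy.2]))
    rw [intervalIntegral.integral_add i1 i2, int_max1 (by linarith) (by linarith),
      int_max2 (by linarith) (by linarith)] at this
    refine this.trans (le_of_eq (by rw [hρ]; ring))
  have e := NN_id hf hg (b - a + t) t
  have x1 := NN_ext1 (f := f) hg (b - a + t) t
  have x2 := NN_ext2 (f := f) hg (b - a + t) t
  have x3 := MM_lower hf h0.le (l := 2 * (b - a + t)) (by linarith) (by linarith) (by linarith)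
  rw [ha] at x3
  rw [hb] at e
  have e3 : t * (2 * a + 2 * (b - a + t) - t) - t * (2 * b) = t ^ 2 := by ring
  refine ⟨?_, ?_, ?_⟩ <;> linarith

lemma step2 {f : ℝ → ℝ} (hf : PF f) {a b t : ℝ}
    (ha : ∫ y in (0:ℝ)..(2 * π), f y = 2 * a) (h0 : 0 < t) (h1 : t ≤ 2 * a) (h2 : t < π - b)
    (hab : a ≤ b) (hM : MM f t (2 * (b - a + t)) = t * (2 * a + 2 * (b - a + t) - t)) :
    ∃ y ∈ Set.Icc 0 (2 * π), 2 * a - t ≤ HH f (2 * a) y := by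
  by_contra hcon
  push Not at hcon
  have hall : ∀ y, HH f (2 * a) y < 2 * a - t := by
    intro y
    obtain ⟨z, hz, e⟩ := (HH_per hf (2 * a)).exists_mem_Ico₀ two_pi_pos y
    rw [e]; exact hcon z ⟨hz.1, hz.2.le⟩
  have h3 : MM f t (2 * π - 2 * a) = 2 * π * t := by
    rw [MM]
    have : ∀ y, min (HH f (2 * π - 2 * a) y) t = t := by
      intro y
      apply min_eq_right
      have e1 := hf.int_add y (y + (2 * π - 2 * a)) (y + 2 * π)
      have e2 := hall (y + (2 * π - 2 * a))
      rw [hf.int_period, ha] at e1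
      unfold HH at *
      rw [show y + (2 * π - 2 * a) + 2 * a = y + 2 * π by ring] at e2
      linarith
    simp [this]
  have h4 := MM_concave hf t (p := t) (q := 2 * (b - a + t)) (r := 2 * π - 2 * a) (by linarith)
    (by linarith)
  rw [h3, hM, MM_at_t hf h0.le, ha] at h4
  have : 0 < (2 * (b - a + t) - t) * (t * t) := by
    apply mul_pos (by linarith); positivity
  nlinarith

/-- `f` has full mass on an arc -/
lemma full_arc {f : ℝ → ℝ} (hf : PF f) {a : ℝ} (ha : ∫ y in (0:ℝ)..(2 * π), f y = 2 * a)
    (a0 : 0 ≤ a) (a1 : a ≤ π) {y : ℝ} (h : 2 * a ≤ HH f (2 * a) y) :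
    f =ᵐ[volume] fun x => arc a (x - (y + a)) := by
  have hp := pi_pos
  have e1 : ∫ z in y..(y + 2 * a), (1 - f z) = 0 := by
    rw [intervalIntegral.integral_sub intervalIntegrable_const (hf.ii _ _)]
    have := HH_le hf (l := 2 * a) (by linarith) y
    unfold HH at *
    simp; linarith
  have e2 : ∫ z in (y + 2 * a)..(y + 2 * π), f z = 0 := by
    have := hf.int_add y (y + 2 * a) (y + 2 * π)
    rw [hf.int_period, ha] at this
    have := hf.int_nonneg (a := y + 2 * a) (b := y + 2 * π) (by linarith)
    unfold HH at h
    linarith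
  rw [intervalIntegral.integral_eq_zero_iff_of_le_of_nonneg_ae (by linarith)
    (by filter_upwards with z; simpa using hf.le_one z)
    (intervalIntegrable_const.sub (hf.ii _ _))] at e1
  rw [intervalIntegral.integral_eq_zero_iff_of_le_of_nonneg_ae (by linarith)
    (by filter_upwards with z; simpa using hf.nonneg z) (hf.ii _ _)] at e2
  have e1 := (ae_restrict_iff' measurableSet_Ioc).1 e1
  have e2 := (ae_restrict_iff' measurableSet_Ioc).1 e2
  have ne1 : ∀ᵐ z : ℝ, z ≠ y + 2 * a := by simp [ae_iff]
  have ne2 : ∀ᵐ z : ℝ, z ≠ y + 2 * π := by simp [ae_iff]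
  refine ae_of_per (fun x => ?_) y ?_
  · have := (arc_per a) (x - (y + a))
    show f (x + 2 * π) = arc a (x + 2 * π - (y + a)) ↔ f x = arc a (x - (y + a))
    rw [hf.per x, ← this, show x + 2 * π - (y + a) = x - (y + a) + 2 * π by ring]
  filter_upwards [e1, e2, ne1, ne2] with z z1 z2 z3 z4 hz
  have hz2 := lt_of_le_of_ne hz.2 z4
  rcases lt_or_gt_of_ne z3 with h3 | h3
  · have := z1 ⟨hz.1, h3.le⟩
    simp at this
    rw [arc_eq (by linarith [hz.1]) (by linarith), if_pos (by rw [abs_lt]; constructor <;> linarith [hz.1])]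
    linarith
  · have := z2 ⟨h3, hz.2⟩
    simp at this
    rw [this, arc_zero (by linarith) (by linarith) a0]

lemma step3 {g : ℝ → ℝ} (hg : PF g) {a b t : ℝ}
    (hb : ∫ y in (0:ℝ)..(2 * π), g y = 2 * b) (h0 : 0 < t) (h1 : t < 2 * a) (h2 : t < π - b)
    (hab : a ≤ b) (hN : NN (arc a) g (b - a + t) ≤ NN (arc a) (arc b) (b - a + t)) :
    g =ᵐ[volume] arc b := by
  have hp := pi_pos
  obtain ⟨-, e1, e2⟩ := step1 (arc_PF a) hg (arc_mass (by linarith) (by linarith)) hb h0 h1.le h2 hab hN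
  set ρ := b - a + t with hρ
  set h := fun y => HH (arc a) (2 * ρ) (y - ρ) with hh
  have hc : Continuous h := HHs_cont (arc_PF a) ρ
  have i1 : IntervalIntegrable (fun y => (1 - g y) * (h y - min (h y) t)) volume 0 (2 * π) :=
    (intervalIntegrable_const.sub (hg.ii _ _)).mul_continuousOn (by fun_prop)
  have i2 : IntervalIntegrable (fun y => g y * (t - min (h y) t)) volume 0 (2 * π) :=
    (hg.ii _ _).mul_continuousOn (by fun_prop)
  rw [intervalIntegral.integral_eq_zero_iff_of_le_of_nonneg_ae (by linarith)
    (by filter_upwards with y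
        exact mul_nonneg (by linarith [hg.le_one y]) (by linarith [min_le_left (h y) t])) i1] at e1
  rw [intervalIntegral.integral_eq_zero_iff_of_le_of_nonneg_ae (by linarith)
    (by filter_upwards with y
        exact mul_nonneg (by linarith [hg.nonneg y]) (by linarith [min_le_right (h y) t])) i2] at e2
  have e1 := (ae_restrict_iff' measurableSet_Ioc).1 e1
  have e2 := (ae_restrict_iff' measurableSet_Ioc).1 e2
  have n1 : ∀ᵐ z : ℝ, z ≠ b := by simp [ae_iff]
  have n2 : ∀ᵐ z : ℝ, z ≠ 2 * π - b := by simp [ae_iff]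
  have n3 : ∀ᵐ z : ℝ, z ≠ 2 * π := by simp [ae_iff]
  refine ae_of_per (fun x => ?_) 0 ?_
  · rw [hg.per x, arc_per b x]
  filter_upwards [e1, e2, n1, n2, n3] with y y1 y2 y3 y4 y5 hy
  rw [zero_add] at hy
  have y1 := y1 hy
  have y2 := y2 hy
  simp only [Pi.zero_apply, mul_eq_zero] at y1 y2
  have hy2 := lt_of_le_of_ne hy.2 y5
  have big : t < h y → g y = 1 := by
    intro hb
    rcases y1 with q | q
    · linarith
    · rw [min_eq_right hb.le] at q; linarith
  rcases lt_or_gt_of_ne y3 with h3 | h3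
  · rw [arc_one hy.1.le h3 (by linarith)]
    apply big
    refine lt_of_lt_of_le ?_ (arc_H_ge (by linarith) (by linarith) (by linarith) (by linarith)
      hy.1.le hy.2)
    rw [abs_of_pos hy.1, lt_min_iff, lt_min_iff]
    refine ⟨⟨?_, ?_⟩, ?_⟩ <;> linarith
  rcases lt_or_gt_of_ne y4 with h4 | h4
  · rw [arc_zero h3 h4 (by linarith)]
    have : h y < t := by
      refine lt_of_le_of_lt (arc_H_le (by linarith) (by linarith) (by linarith) (by linarith)
        hy.1.le hy.2) ?_
      rcases max_cases (a + ρ - y) 0 with q | q <;>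
      rcases max_cases (a + ρ + (y - 2 * π)) 0 with q' | q' <;> linarith
    rcases y2 with q | q
    · exact q
    · rw [min_eq_left this.le] at q; linarith
  · rw [arc_one' h4 hy2 (by linarith)]
    apply big
    refine lt_of_lt_of_le ?_ (arc_H_ge' (by linarith) (by linarith) (by linarith) (by linarith)
      hy.1.le hy.2)
    rw [abs_of_neg (by linarith), lt_min_iff, lt_min_iff]
    refine ⟨⟨?_, ?_⟩, ?_⟩ <;> linarith

theorem circ_eq {f g : ℝ → ℝ} (hf : PF f) (hg : PF g) {a b : ℝ}
    (ha : ∫ y in (0:ℝ)..(2 * π), f y = 2 * a)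
    (hb : ∫ y in (0:ℝ)..(2 * π), g y = 2 * b) (a0 : 0 < a) (hab : a ≤ b) (b1 : b < π)
    (H : ∀ ε > 0, ∃ ρ, b - a < ρ ∧ ρ < b - a + ε ∧ NN f g ρ ≤ NN (arc a) (arc b) ρ) :
    ∃ α, (f =ᵐ[volume] fun x => arc a (x - α)) ∧ (g =ᵐ[volume] fun x => arc b (x - α)) := by
  have hp := pi_pos
  have H' : ∀ ε > 0, ∃ t, 0 < t ∧ t < ε ∧ t < 2 * a ∧ t < π - b ∧
      NN f g (b - a + t) ≤ NN (arc a) (arc b) (b - a + t) := by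
    intro ε hε
    obtain ⟨ρ, r1, r2, r3⟩ := H (min ε (min (2 * a) (π - b))) (by
      apply lt_min hε (lt_min _ _) <;> linarith)
    have q1 := min_le_left ε (min (2 * a) (π - b))
    have q2 := min_le_right ε (min (2 * a) (π - b))
    have q3 := min_le_left (2 * a) (π - b)
    have q4 := min_le_right (2 * a) (π - b)
    exact ⟨ρ - (b - a), by linarith, by linarith, by linarith, by linarith, by
      rwa [add_sub_cancel]⟩
  obtain ⟨y0, -, hy0⟩ := isCompact_Icc.exists_isMaxOn (s := Set.Icc 0 (2 * π))
    ⟨0, by constructor <;> linarith⟩ (HH_cont_y hf (2 * a)).continuousOn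
  have hfull : 2 * a ≤ HH f (2 * a) y0 := by
    by_contra hc
    push Not at hc
    obtain ⟨t, t0, t1, t2, t3, t4⟩ := H' (2 * a - HH f (2 * a) y0) (by linarith)
    obtain ⟨s1, -, -⟩ := step1 hf hg ha hb t0 t2.le t3 hab t4
    obtain ⟨y, hy, h⟩ := step2 hf ha t0 t2.le t3 hab s1
    have : HH f (2 * a) y ≤ HH f (2 * a) y0 := hy0 hy
    linarith
  have hF := full_arc hf ha a0.le (by linarith) hfull
  refine ⟨y0 + a, hF, ?_⟩
  set α := y0 + a
  have hF' : (fun x => f (x + α)) =ᵐ[volume] arc a := by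
    have := ae_shift hF α
    filter_upwards [this] with x hx
    rw [hx]; simp
  obtain ⟨t, t0, t1, t2, t3, t4⟩ := H' 1 one_pos
  rw [← NN_shift hf hg α, NN_congr hF' (Filter.EventuallyEq.refl _ _)] at t4
  have := step3 (hg.shift α) (by rw [mass_shift hg, hb]) t0 t2 t3 hab t4
  have := ae_shift this (-α)
  filter_upwards [this] with x hx
  simpa [sub_eq_add_neg] using hx

lemma arc_unique {a α β : ℝ} (a0 : 0 < a) (a1 : a < π)
    (h : (fun x => arc a (x - α)) =ᵐ[volume] fun x => arc a (x - β)) :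
    ∀ b x, arc b (x - α) = arc b (x - β) := by
  have hp := pi_pos
  have e : HH (arc a) (2 * a) (-a) = HH (arc a) (2 * a) (α - β - a) := by
    have h' := ae_shift h α
    have := HH_congr (f := arc a) (f' := fun x => arc a (x + (α - β))) (by
      filter_upwards [h'] with x hx
      rw [add_sub_cancel_right] at hx
      rw [hx]; congr 1; ring) (2 * a) (-a)
    rw [this, HH_shift]; congr 1; ring
  have e1 : HH (arc a) (2 * a) (-a) = 2 * a := by
    unfold HH
    rw [int_one_of (by linarith)]
    · ring
    · intro x hx
      rw [arc_eq (by linarith [hx.1]) (by linarith [hx.2]), if_pos]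
      rw [abs_lt]; constructor <;> linarith [hx.1, hx.2]
  obtain ⟨k, hk, -⟩ := existsUnique_add_zsmul_mem_Ico two_pi_pos (α - β) 0
  rw [zero_add] at hk
  have e2 : HH (arc a) (2 * a) ((α - β + k • (2 * π)) - a) = HH (arc a) (2 * a) (α - β - a) := by
    rw [← (HH_per (arc_PF a) (2 * a)).zsmul k (α - β - a)]; congr 1; ring
  have l := arc_H_le a0.le a1.le a0.le a1.le hk.1 hk.2.le
  rw [e2, ← e, e1] at l
  have hz : α - β + k • (2 * π) = 0 := by
    by_contra hne
    have hpos := lt_of_le_of_ne hk.1 (Ne.symm hne)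
    rcases max_cases (a + a - (α - β + k • (2 * π))) 0 with q | q <;>
      rcases max_cases (a + a + ((α - β + k • (2 * π)) - 2 * π)) 0 with q' | q' <;> linarith [hk.2]
  intro b x
  rw [← (arc_per b).zsmul k (x - β)]
  congr 1; linarith

lemma arc_triv0 (x : ℝ) : arc 0 x = 0 := by
  unfold arc; rw [if_neg (not_lt.2 (abs_nonneg _))]

lemma mass0 {f : ℝ → ℝ} (hf : PF f) (h : ∫ y in (0:ℝ)..(2 * π), f y = 0) (α : ℝ) :
    f =ᵐ[volume] fun x => arc 0 (x - α) := by
  have := full_arc hf (a := 0) (by simpa using h) le_rfl pi_pos.le (y := α)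
    (HH_nonneg hf (by simp) _ |>.trans' (by simp))
  simpa using this

lemma massπ {f : ℝ → ℝ} (hf : PF f) (h : ∫ y in (0:ℝ)..(2 * π), f y = 2 * π) (α : ℝ) :
    f =ᵐ[volume] fun x => arc π (x - α) := by
  have := full_arc hf (a := π) h pi_pos.le le_rfl (y := α - π) (by
    unfold HH; rw [hf.int_period, h])
  simpa using this



/-- Fourier coefficients of the finite Jacobi triple product -/
noncomputable def jc (q : ℝ) : ℕ → ℤ → ℝ
  | 0 => fun k => if k = 0 then 1 else 0
  | N + 1 => fun k => (1 + (q ^ (2 * N + 1)) ^ 2) * jc q N k +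
      q ^ (2 * N + 1) * (jc q N (k - 1) + jc q N (k + 1))

noncomputable def jp (q z : ℝ) (N : ℕ) : ℝ :=
  ∏ j ∈ Finset.range N, (1 + 2 * q ^ (2 * j + 1) * cos z + (q ^ (2 * j + 1)) ^ 2)

lemma jp_succ (q z : ℝ) (N : ℕ) : jp q z (N + 1) =
    jp q z N * (1 + 2 * q ^ (2 * N + 1) * cos z + (q ^ (2 * N + 1)) ^ 2) :=
  Finset.prod_range_succ _ _

lemma jc_succ (q : ℝ) (N : ℕ) (k : ℤ) : jc q (N + 1) k = (1 + (q ^ (2 * N + 1)) ^ 2) * jc q N k +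
      q ^ (2 * N + 1) * (jc q N (k - 1) + jc q N (k + 1)) := rfl

lemma jc_nonneg {q : ℝ} (hq : 0 < q) (N : ℕ) : ∀ k, 0 ≤ jc q N k := by
  induction N with
  | zero => intro k; simp only [jc]; split_ifs <;> norm_num
  | succ N ih =>
    intro k; simp only [jc]
    have := ih k; have := ih (k-1); have := ih (k+1)
    positivity

lemma jc_zero_pos {q : ℝ} (hq : 0 < q) (N : ℕ) : 0 < jc q N 0 := by
  induction N with
  | zero => simp [jc]
  | succ N ih =>
    simp only [jc]
    have := jc_nonneg hq N (0-1); have := jc_nonneg hq N (0+1)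
    positivity

lemma jc_symm (q : ℝ) (N : ℕ) : ∀ k, jc q N (-k) = jc q N k := by
  induction N with
  | zero => intro k; simp [jc]
  | succ N ih =>
    intro k; simp only [jc]
    rw [ih k, ← ih (k - 1), ← ih (k + 1), neg_sub, neg_add, show -k - 1 = -k + -1 by ring,
      show -k + 1 = 1 - k by ring]
    ring

lemma jc_rec {q : ℝ} (hq : 0 < q) (N : ℕ) : ∀ k : ℤ,
    jc q N (k + 1) * (1 - q ^ (2 * N + 1) * q ^ (2 * k + 1)) =
      jc q N k * (q ^ (2 * k + 1) - q ^ (2 * N + 1)) := by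
  have hq0 := hq.ne'
  induction N with
  | zero =>
    intro k
    simp only [jc]
    by_cases h : k = 0
    · subst h; simp
    by_cases h' : k + 1 = 0
    · have : k = -1 := by omega
      subst this; simp [hq0]
    · simp [h, h']
  | succ N ih =>
    intro k
    have r0 := ih k
    have r1 := ih (k + 1)
    have r2 := ih (k - 1)
    simp only [jc]
    have e1 : q ^ (2 * (k + 1) + 1) = q ^ (2 * k + 1) * q ^ 2 := by
      rw [show 2 * (k + 1) + 1 = (2 * k + 1) + 2 by ring, zpow_add₀ hq0]; norm_cast
    have e2 : q ^ (2 * (k - 1) + 1) * q ^ 2 = q ^ (2 * k + 1) := by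
      rw [show (2 * k + 1) = (2 * (k - 1) + 1) + 2 by ring, zpow_add₀ hq0 (2 * (k - 1) + 1) 2]
      norm_cast
    have e3 : q ^ (2 * (N + 1) + 1) = q ^ (2 * N + 1) * q ^ 2 := by ring
    rw [e1] at r1
    rw [e3]
    simp only [sub_add_cancel, add_sub_cancel_right] at *
    set Q := q ^ (2 * N + 1)
    set x := q ^ (2 * k + 1)
    set y := q ^ (2 * (k - 1) + 1)
    have r2' : jc q N k * (q ^ 2 - Q * x) = jc q N (k - 1) * (x - Q * q ^ 2) := by
      rw [← e2]; linear_combination q ^ 2 * r2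
    linear_combination (1 + Q ^ 2 * q ^ 2) * r0 + Q * r1 + Q * r2'

lemma jc_le {q : ℝ} (hq : 0 < q) (hq1 : q < 1) (N : ℕ) (k : ℕ) :
    jc q N (k + 1 : ℕ) ≤ q ^ (2 * k + 1) * jc q N k := by
  have r := jc_rec hq N k
  have e : q ^ (2 * (k : ℤ) + 1) = q ^ (2 * k + 1) := by norm_cast
  rw [e] at r
  push_cast
  have c0 := jc_nonneg hq N k
  have hx : q ^ (2 * k + 1) < 1 := pow_lt_one₀ hq.le hq1 (by omega)
  have hx0 : 0 < q ^ (2 * k + 1) := by positivity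
  have hQ : q ^ (2 * N + 1) < 1 := pow_lt_one₀ hq.le hq1 (by omega)
  have hQ0 : 0 < q ^ (2 * N + 1) := by positivity
  set x := q ^ (2 * k + 1)
  set Q := q ^ (2 * N + 1)
  have hp : 0 < 1 - Q * x := by nlinarith
  refine le_of_mul_le_mul_right ?_ hp
  rw [r]
  have : x - Q ≤ x * (1 - Q * x) := by nlinarith [mul_nonneg hQ0.le (by nlinarith : 0 ≤ 1 - x * x)]
  calc _ ≤ jc q N k * (x * (1 - Q * x)) := mul_le_mul_of_nonneg_left this c0
    _ = _ := by ring

lemma jc_le' {q : ℝ} (hq : 0 < q) (hq1 : q < 1) (N : ℕ) (k : ℕ) :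
    jc q N k ≤ q ^ (k ^ 2) * jc q N 0 := by
  induction k with
  | zero => simp
  | succ k ih =>
    refine (jc_le hq hq1 N k).trans ?_
    calc _ ≤ q ^ (2 * k + 1) * (q ^ (k ^ 2) * jc q N 0) :=
          mul_le_mul_of_nonneg_left ih (by positivity)
      _ = _ := by rw [show (k+1)^2 = (2 * k + 1) + k ^ 2 by ring, pow_add]; ring

lemma jc_lim {q : ℝ} (hq : 0 < q) (hq1 : q < 1) (k : ℕ) :
    Filter.Tendsto (fun N => jc q N k / jc q N 0) Filter.atTop (nhds (q ^ (k ^ 2))) := by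
  have hQ : Filter.Tendsto (fun N : ℕ => q ^ (2 * N + 1)) Filter.atTop (nhds 0) :=
    (tendsto_pow_atTop_nhds_zero_of_lt_one hq.le hq1).comp
      (Filter.tendsto_atTop_mono (fun N => (by omega : N ≤ 2 * N + 1)) Filter.tendsto_id)
  induction k with
  | zero =>
    refine tendsto_const_nhds.congr fun N => ?_
    simp [(jc_zero_pos hq N).ne']
  | succ k ih =>
    have e : q ^ (2 * (k : ℤ) + 1) = q ^ (2 * k + 1) := by norm_cast
    have h2 : Filter.Tendsto (fun N : ℕ => (jc q N k / jc q N 0) *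
        ((q ^ (2 * k + 1) - q ^ (2 * N + 1)) / (1 - q ^ (2 * N + 1) * q ^ (2 * k + 1))))
        Filter.atTop (nhds (q ^ (k ^ 2) * ((q ^ (2 * k + 1) - 0) / (1 - 0 * q ^ (2 * k + 1))))) := by
      apply ih.mul
      apply (tendsto_const_nhds.sub hQ).div (tendsto_const_nhds.sub (hQ.mul_const _))
      simp
    have e2 : q ^ (k ^ 2) * ((q ^ (2 * k + 1) - 0) / (1 - 0 * q ^ (2 * k + 1))) = q ^ ((k + 1) ^ 2) := by
      rw [show (k+1)^2 = k ^ 2 + (2 * k + 1) by ring, pow_add q (k ^ 2)]; simp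
    rw [e2] at h2
    refine h2.congr fun N => ?_
    have r := jc_rec hq N k
    rw [e] at r
    push_cast
    have hx : q ^ (2 * k + 1) < 1 := pow_lt_one₀ hq.le hq1 (by omega)
    have hx0 : 0 < q ^ (2 * k + 1) := by positivity
    have hQ : q ^ (2 * N + 1) < 1 := pow_lt_one₀ hq.le hq1 (by omega)
    have hQ0 : 0 < q ^ (2 * N + 1) := by positivity
    have hp : 1 - q ^ (2 * N + 1) * q ^ (2 * k + 1) ≠ 0 := by nlinarith
    rw [div_mul_div_comm, ← r, mul_comm (jc q N 0), mul_comm (jc q N (k + 1)),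
      mul_div_mul_left _ _ hp]

lemma jc_fin (q : ℝ) (N : ℕ) : (Function.support (jc q N)).Finite := by
  induction N with
  | zero =>
    refine (Set.finite_singleton (0:ℤ)).subset fun k hk => ?_
    simp [jc] at hk; simpa using hk
  | succ N ih =>
    have h1 : (Function.support fun k => jc q N (k - 1)).Finite :=
      ih.preimage (f := fun k : ℤ => k - 1) (fun _ _ _ _ h => by simpa using h)
    have h2 : (Function.support fun k => jc q N (k + 1)).Finite :=
      ih.preimage (f := fun k : ℤ => k + 1) (fun _ _ _ _ h => by simpa using h)
    refine ((ih.union h1).union h2).subset fun k hk => ?_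
    by_contra hc
    simp at hc
    apply hk
    simp [jc, hc]

lemma jp_eq (q z : ℝ) (N : ℕ) : HasSum (fun k : ℤ => jc q N k * cos (k * z)) (jp q z N) := by
  induction N with
  | zero =>
    have := hasSum_ite_eq (0 : ℤ) (1 : ℝ)
    convert this using 2 with k
    · by_cases h : k = 0 <;> simp [jc, h]
    · simp [jp]
  | succ N ih =>
    have fs : ∀ e : ℤ → ℝ, Summable fun k : ℤ => jc q N k * e k := fun e =>
      summable_of_hasFiniteSupport ((jc_fin q N).subset (Function.support_mul_subset_left _ _))
    have s1 := fs (fun k => cos ((k + 1 : ℤ) * z))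
    have s2 := fs (fun k => cos ((k - 1 : ℤ) * z))
    have h1 := ((Equiv.addRight (-1 : ℤ)).hasSum_iff).2 s1.hasSum
    have h2 := ((Equiv.addRight (1 : ℤ)).hasSum_iff).2 s2.hasSum
    have h3 : (∑' k : ℤ, jc q N k * cos ((k + 1 : ℤ) * z)) +
        (∑' k : ℤ, jc q N k * cos ((k - 1 : ℤ) * z)) = 2 * cos z * jp q z N := by
      rw [← s1.tsum_add s2, ← ih.tsum_eq, ← tsum_mul_left]
      congr 1; ext k
      push_cast
      rw [add_mul, sub_mul, one_mul, cos_add, cos_sub]; ring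
    have h4 := (ih.mul_left (1 + (q ^ (2 * N + 1)) ^ 2)).add ((h1.add h2).mul_left (q ^ (2 * N + 1)))
    rw [h3] at h4
    simp only [Function.comp, Equiv.coe_addRight] at h4
    rw [jp_succ, show jp q z N * (1 + 2 * q ^ (2 * N + 1) * cos z + (q ^ (2 * N + 1)) ^ 2) =
      (1 + (q ^ (2 * N + 1)) ^ 2) * jp q z N + q ^ (2 * N + 1) * (2 * cos z * jp q z N) by ring]
    suffices he : (fun k : ℤ => jc q (N + 1) k * cos (k * z)) = fun k : ℤ =>
        (1 + (q ^ (2 * N + 1)) ^ 2) * (jc q N k * cos (k * z)) + q ^ (2 * N + 1) *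
        (jc q N (k + -1) * cos ((k + -1 + 1 : ℤ) * z) + jc q N (k + 1) * cos ((k + 1 - 1 : ℤ) * z)) by
      rw [he]; exact h4
    ext k
    rw [jc_succ, ← sub_eq_add_neg, sub_add_cancel, add_sub_cancel_right]; ring

lemma jfac_pos {Q z : ℝ} (hQ0 : 0 < Q) (hQ : Q < 1) : 0 < 1 + 2 * Q * cos z + Q ^ 2 := by
  have := neg_one_le_cos z
  nlinarith [mul_nonneg hQ0.le (by linarith : 0 ≤ 1 + cos z), sq_nonneg (1 - Q), mul_self_pos.2 (by linarith : 1 - Q ≠ 0)]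

lemma jp_nonneg {q z : ℝ} (hq : 0 < q) (hq1 : q < 1) (N : ℕ) : 0 ≤ jp q z N :=
  Finset.prod_nonneg fun j _ => (jfac_pos (by positivity) (pow_lt_one₀ hq.le hq1 (by omega))).le

lemma jp_ineq {q z w : ℝ} (hq : 0 < q) (hq1 : q < 1) (hz : 0 ≤ z) (hzw : z ≤ w) (hw : w ≤ π) (N : ℕ) :
    jp q w (N + 1) * (1 + 2 * q * cos z + q ^ 2) ≤ jp q z (N + 1) * (1 + 2 * q * cos w + q ^ 2) := by
  have hc : cos w ≤ cos z := cos_le_cos_of_nonneg_of_le_pi hz hw hzw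
  induction N with
  | zero => simp [jp]; linarith
  | succ N ih =>
    rw [jp_succ, jp_succ q z (N + 1)]
    set Q := q ^ (2 * (N + 1) + 1)
    have hQ0 : 0 < Q := by positivity
    have hQ1 : Q < 1 := pow_lt_one₀ hq.le hq1 (by omega)
    have f1 := jfac_pos (z := z) hQ0 hQ1
    have f2 := jfac_pos (z := w) hQ0 hQ1
    have f3 := jfac_pos (z := w) hq hq1
    have p1 := jp_nonneg (z := z) hq hq1 (N + 1)
    calc _ = (jp q w (N + 1) * (1 + 2 * q * cos z + q ^ 2)) * (1 + 2 * Q * cos w + Q ^ 2) := by ring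
      _ ≤ (jp q z (N + 1) * (1 + 2 * q * cos w + q ^ 2)) * (1 + 2 * Q * cos z + Q ^ 2) := by
        apply mul_le_mul ih _ f2.le (mul_nonneg p1 f3.le)
        nlinarith
      _ = _ := by ring

lemma summable_qsq {q : ℝ} (hq : 0 < q) (hq1 : q < 1) : Summable fun k : ℤ => q ^ (k.natAbs ^ 2) := by
  have hs : Summable fun n : ℕ => q ^ (n ^ 2) := by
    refine Summable.of_nonneg_of_le (fun n => by positivity) (fun n => ?_)
      (summable_geometric_of_lt_one hq.le hq1)
    exact pow_le_pow_of_le_one hq.le hq1.le (by nlinarith)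
  apply Summable.of_nat_of_neg
  · simpa using hs
  · simpa using hs

noncomputable def vth (q z : ℝ) : ℝ := ∑' k : ℤ, q ^ (k.natAbs ^ 2) * cos (k * z)

lemma jc_abs (q : ℝ) (N : ℕ) (k : ℤ) : jc q N k = jc q N (k.natAbs : ℕ) := by
  rcases Int.natAbs_eq k with h | h
  · rw [← h]
  · conv_lhs => rw [h]
    rw [jc_symm]

lemma jp_lim {q : ℝ} (hq : 0 < q) (hq1 : q < 1) (z : ℝ) :
    Filter.Tendsto (fun N => jp q z N / jc q N 0) Filter.atTop (nhds (vth q z)) := by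
  have h : ∀ N, jp q z N / jc q N 0 = ∑' k : ℤ, jc q N k / jc q N 0 * cos (k * z) := by
    intro N
    rw [← (jp_eq q z N).tsum_eq, ← tsum_div_const]
    congr 1; ext k; ring
  simp only [h]
  apply tendsto_tsum_of_dominated_convergence (summable_qsq hq hq1)
  · intro k
    apply Filter.Tendsto.mul_const
    simp only [jc_abs q _ k]
    exact jc_lim hq hq1 _
  · filter_upwards with N k
    rw [norm_mul]
    have h1 : ‖cos (k * z)‖ ≤ 1 := abs_cos_le_one _
    have h0 := jc_zero_pos hq N
    have h2 : ‖jc q N k / jc q N 0‖ ≤ q ^ (k.natAbs ^ 2) := by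
      rw [norm_of_nonneg (div_nonneg (jc_nonneg hq _ _) h0.le), div_le_iff₀ h0, jc_abs]
      exact jc_le' hq hq1 N _
    calc _ ≤ ‖jc q N k / jc q N 0‖ * 1 := mul_le_mul_of_nonneg_left h1 (norm_nonneg _)
      _ ≤ _ := by simpa using h2

lemma vth_ineq {q z w : ℝ} (hq : 0 < q) (hq1 : q < 1) (hz : 0 ≤ z) (hzw : z ≤ w) (hw : w ≤ π) :
    vth q w * (1 + 2 * q * cos z + q ^ 2) ≤ vth q z * (1 + 2 * q * cos w + q ^ 2) := by
  have h1 := ((jp_lim hq hq1 w).comp (Filter.tendsto_add_atTop_nat 1)).mul_const (1 + 2 * q * cos z + q ^ 2)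
  have h2 := ((jp_lim hq hq1 z).comp (Filter.tendsto_add_atTop_nat 1)).mul_const (1 + 2 * q * cos w + q ^ 2)
  refine le_of_tendsto_of_tendsto' h1 h2 fun N => ?_
  simp only [Function.comp]
  rw [div_mul_eq_mul_div, div_mul_eq_mul_div]
  exact div_le_div_of_nonneg_right (jp_ineq hq hq1 hz hzw hw N) (jc_zero_pos hq _).le

lemma vth_strict {q z w : ℝ} (hq : 0 < q) (hq1 : q < 1) (hz : 0 ≤ z) (hzw : z < w) (hw : w ≤ π)
    (hpos : 0 < vth q w) : vth q w < vth q z := by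
  have h := vth_ineq hq hq1 hz hzw.le hw
  have hc : cos w < cos z := cos_lt_cos_of_nonneg_of_le_pi hz hw hzw
  have f3 := jfac_pos (z := w) hq hq1
  refine lt_of_mul_lt_mul_right ?_ f3.le
  refine lt_of_lt_of_le ?_ h
  apply mul_lt_mul_of_pos_left _ hpos
  nlinarith

noncomputable def Th (l z : ℝ) : ℝ := ∑' k : ℤ, exp (-l * (z + 2 * π * k) ^ 2)

lemma Th_summable {l : ℝ} (hl : 0 < l) (z : ℝ) : Summable fun k : ℤ => exp (-l * (z + 2 * π * k) ^ 2) := by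
  have h := (hasSum_jacobiTheta₂_term (((2 * l * z : ℝ) : ℂ) * Complex.I)
    (τ := ((4 * π * l : ℝ) : ℂ) * Complex.I) (by simp; positivity)).summable.norm
  simp only [norm_jacobiTheta₂_term] at h
  refine (h.mul_left (exp (-l * z ^ 2))).congr fun k => ?_
  rw [← exp_add]
  congr 1
  simp
  ring

lemma Th_pos {l : ℝ} (hl : 0 < l) (z : ℝ) : 0 < Th l z :=
  (Th_summable hl z).tsum_pos (fun _ => (exp_pos _).le) 0 (exp_pos _)

lemma Th_vth {l : ℝ} (hl : 0 < l) (z : ℝ) :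
    vth (exp (-(1 / (4 * l)))) z = (4 * π * l) ^ (1 / 2 : ℝ) * Th l z := by
  have hp := pi_pos
  have ha : 0 < 1 / (4 * π * l) := by positivity
  have h := Complex.tsum_exp_neg_quadratic (a := ((1 / (4 * π * l) : ℝ) : ℂ))
    (by rwa [Complex.ofReal_re]) (-(Complex.I * ((z / (2 * π) : ℝ) : ℂ)))
  have hR : (∑' n : ℤ, Complex.exp (-π / ((1 / (4 * π * l) : ℝ) : ℂ) *
      (n + Complex.I * -(Complex.I * ((z / (2 * π) : ℝ) : ℂ))) ^ 2)) = (Th l z : ℝ) := by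
    rw [Th, Complex.ofReal_tsum]
    congr 1; ext k
    rw [Complex.ofReal_exp]
    congr 1
    have e : (k:ℂ) + Complex.I * -(Complex.I * ((z / (2 * π) : ℝ) : ℂ)) = ((k + z / (2 * π) : ℝ) : ℂ) := by
      push_cast
      rw [mul_neg, ← mul_assoc, Complex.I_mul_I]; ring
    rw [e, ← Complex.ofReal_neg, ← Complex.ofReal_div, ← Complex.ofReal_pow, ← Complex.ofReal_mul]
    congr 1
    field_simp
    ring
  rw [hR] at h
  have hC : (1 : ℂ) / ((1 / (4 * π * l) : ℝ) : ℂ) ^ (1 / 2 : ℂ) = (((4 * π * l) ^ (1 / 2 : ℝ) : ℝ) : ℂ) := by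
    rw [show (1 / 2 : ℂ) = ((1 / 2 : ℝ) : ℂ) by push_cast; rfl, ← Complex.ofReal_cpow ha.le, one_div,
      ← Complex.ofReal_inv]
    congr 1
    rw [one_div, inv_rpow (by positivity), inv_inv]
  rw [hC, ← Complex.ofReal_mul] at h
  have h' := congrArg Complex.re h
  rw [Complex.ofReal_re] at h'
  rw [← h', vth]
  have hq1 : exp (-(1 / (4 * l))) < 1 := by
    rw [exp_lt_one_iff]; have : 0 < 1 / (4 * l) := by positivity
    linarith
  have hterm : ∀ k : ℤ, Complex.exp (-π * ((1 / (4 * π * l) : ℝ) : ℂ) * k ^ 2 +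
      2 * π * (-(Complex.I * ((z / (2 * π) : ℝ) : ℂ))) * k) =
      ((exp (-(1 / (4 * l))) ^ (k.natAbs ^ 2) : ℝ) : ℂ) * Complex.exp (((-(k * z) : ℝ) : ℂ) * Complex.I) := by
    intro k
    rw [← Real.exp_nat_mul, Complex.ofReal_exp, ← Complex.exp_add]
    congr 1
    have : ((k.natAbs ^ 2 : ℕ) : ℝ) = (k:ℝ) ^ 2 := by
      have h9 : ((k.natAbs ^ 2 : ℕ) : ℤ) = k ^ 2 := by push_cast; exact sq_abs k
      have h8 := congrArg (Int.cast : ℤ → ℝ) h9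
      rw [Int.cast_natCast] at h8
      rw [h8]; push_cast; rfl
    rw [this]
    have hpc : (π : ℂ) ≠ 0 := by exact_mod_cast hp.ne'
    have hlc : (l : ℂ) ≠ 0 := by exact_mod_cast hl.ne'
    push_cast
    field_simp
  simp only [hterm]
  rw [Complex.re_tsum]
  · congr 1; ext k
    rw [Complex.re_ofReal_mul, Complex.exp_ofReal_mul_I_re, cos_neg]
  · refine Summable.of_norm ?_
    refine (summable_qsq (exp_pos (-(1 / (4 * l)))) hq1).congr fun k => ?_
    rw [norm_mul, Complex.norm_exp_ofReal_mul_I, mul_one, Complex.norm_real, norm_of_nonneg (by positivity)]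

lemma Th_strict {l z w : ℝ} (hl : 0 < l) (hz : 0 ≤ z) (hzw : z < w) (hw : w ≤ π) : Th l w < Th l z := by
  have hp := pi_pos
  have hC : 0 < (4 * π * l) ^ (1 / 2 : ℝ) := by positivity
  have h1 : exp (-(1 / (4 * l))) < 1 := by
    rw [exp_lt_one_iff]; have : 0 < 1 / (4 * l) := by positivity
    linarith
  have := vth_strict (exp_pos _) h1 hz hzw hw (by
    rw [Th_vth hl]; exact mul_pos hC (Th_pos hl w))
  rw [Th_vth hl, Th_vth hl] at this
  exact lt_of_mul_lt_mul_left this hC.le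



noncomputable def Kr (p r z : ℝ) : ℝ≥0∞ :=
  ∑' k : ℤ, ENNReal.ofReal (1 / sqrt ((z + 2 * π * k) ^ 2 + r ^ 2) ^ p)

lemma Kr_even (p r z : ℝ) : Kr p r (-z) = Kr p r z := by
  unfold Kr
  rw [← (Equiv.neg ℤ).tsum_eq]
  congr 1; ext k
  simp only [Equiv.neg_apply]
  push_cast
  congr 5; ring

lemma gamma_l {p x : ℝ} (hp : 0 < p) (hx : 0 < x) :
    ENNReal.ofReal (1 / sqrt x ^ p) = ENNReal.ofReal (1 / Gamma (p / 2)) *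
      ∫⁻ l in Set.Ioi (0:ℝ), ENNReal.ofReal (l ^ (p / 2 - 1) * exp (-(x * l))) := by
  have hp2 : 0 < p / 2 := by positivity
  have hG := Gamma_pos_of_pos hp2
  have h := integral_rpow_mul_exp_neg_mul_Ioi hp2 hx
  have hpos : 0 < (1 / x) ^ (p / 2) * Gamma (p / 2) := by positivity
  have hi : IntegrableOn (fun l : ℝ => l ^ (p / 2 - 1) * exp (-(x * l))) (Set.Ioi 0) := by
    by_contra hc
    rw [integral_undef hc] at h
    linarith
  rw [← ofReal_integral_eq_lintegral_ofReal hi ?_, h, ← ENNReal.ofReal_mul (by positivity)]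
  · congr 1
    rw [sqrt_eq_rpow, ← rpow_mul hx.le, one_div x, inv_rpow hx.le]
    field_simp
  · refine (ae_restrict_iff' measurableSet_Ioi).2 (Filter.Eventually.of_forall fun l hl => ?_)
    have : (0:ℝ) < l := hl
    show 0 ≤ l ^ (p / 2 - 1) * exp (-(x * l))
    positivity

lemma Kr_arg_pos {z : ℝ} (hz : 0 < z) (hz' : z ≤ π) (r : ℝ) (k : ℤ) : 0 < (z + 2 * π * k) ^ 2 + r ^ 2 := by
  have hp := pi_pos
  have : z + 2 * π * k ≠ 0 := by
    rcases le_or_gt 0 k with h | h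
    · have : (0:ℝ) ≤ k := by exact_mod_cast h
      positivity
    · have : (k:ℝ) ≤ -1 := by exact_mod_cast (by omega : k ≤ -1)
      nlinarith
  positivity

lemma Th_term (p r z : ℝ) {l : ℝ} (hl : 0 < l) :
    ENNReal.ofReal (l ^ (p / 2 - 1) * exp (-(r ^ 2 * l)) * Th l z) =
    ∑' k : ℤ, ENNReal.ofReal (l ^ (p / 2 - 1) * exp (-(((z + 2 * π * k) ^ 2 + r ^ 2) * l))) := by
  have hs := Th_summable hl z
  rw [Th, ← tsum_mul_left, ENNReal.ofReal_tsum_of_nonneg (fun k => by positivity) (hs.mul_left _)]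
  congr 1; ext k
  congr 1
  rw [mul_assoc (l ^ (p / 2 - 1)), ← exp_add]
  congr 2; ring

lemma Kr_eq {p : ℝ} (hp : 0 < p) {z : ℝ} (hz : 0 < z) (hz' : z ≤ π) (r : ℝ) :
    Kr p r z = ENNReal.ofReal (1 / Gamma (p / 2)) *
      ∫⁻ l in Set.Ioi (0:ℝ), ENNReal.ofReal (l ^ (p / 2 - 1) * exp (-(r ^ 2 * l)) * Th l z) := by
  unfold Kr
  simp_rw [gamma_l hp (Kr_arg_pos hz hz' r _)]
  rw [ENNReal.tsum_mul_left]
  congr 1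
  rw [← lintegral_tsum]
  · refine setLIntegral_congr_fun measurableSet_Ioi fun l hl => ?_
    exact (Th_term p r z hl).symm
  · intro k
    exact (by fun_prop : Measurable fun l : ℝ => ENNReal.ofReal
      (l ^ (p / 2 - 1) * exp (-(((z + 2 * π * k) ^ 2 + r ^ 2) * l)))).aemeasurable

lemma Kr_fin {p : ℝ} (hp : 1 < p) {z : ℝ} (hz : 0 < z) (hz' : z ≤ π) (r : ℝ) : Kr p r z ≠ ⊤ := by
  have hpi := pi_pos
  have hs : Summable fun n : ℤ => 1 / |(n:ℝ) + z / (2 * π)| ^ p :=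
    (Real.summable_one_div_int_add_rpow _ _).2 hp
  have hs2 : Summable fun k : ℤ => 1 / sqrt ((z + 2 * π * k) ^ 2 + r ^ 2) ^ p := by
    refine Summable.of_nonneg_of_le (fun k => by positivity) (fun k => ?_) (hs.mul_left (1 / (2 * π) ^ p))
    have e : sqrt ((z + 2 * π * k) ^ 2) = 2 * π * |(k:ℝ) + z / (2 * π)| := by
      rw [sqrt_sq_eq_abs, show z + 2 * π * k = 2 * π * ((k:ℝ) + z / (2 * π)) by field_simp; ring,
        abs_mul, abs_of_pos two_pi_pos]
    have h0 : 0 < (z + 2 * π * k) ^ 2 := by simpa using Kr_arg_pos hz hz' 0 k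
    rw [one_div_mul_one_div, ← mul_rpow two_pi_pos.le (abs_nonneg _), ← e]
    apply one_div_le_one_div_of_le
    · exact rpow_pos_of_pos (sqrt_pos.2 h0) _
    · apply rpow_le_rpow (sqrt_nonneg _) _ (by linarith)
      apply sqrt_le_sqrt; nlinarith [sq_nonneg r]
  unfold Kr
  rw [← ENNReal.ofReal_tsum_of_nonneg (fun k => by positivity) hs2]
  exact ENNReal.ofReal_ne_top

lemma Kr_strict {p : ℝ} (hp : 1 < p) (r : ℝ) {z w : ℝ} (hz : 0 < z) (hzw : z < w) (hw : w ≤ π) :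
    Kr p r w < Kr p r z := by
  have hw' := Kr_fin hp (hz.trans hzw) hw r
  have hG := Gamma_pos_of_pos (by positivity : 0 < p / 2)
  rw [Kr_eq (by linarith) (hz.trans hzw) hw] at hw' ⊢
  rw [Kr_eq (by linarith) hz (by linarith)]
  have hC0 : ENNReal.ofReal (1 / Gamma (p / 2)) ≠ 0 := by
    rw [Ne, ENNReal.ofReal_eq_zero, not_le]; positivity
  rw [ENNReal.mul_lt_mul_iff_right hC0 ENNReal.ofReal_ne_top]
  apply lintegral_strict_mono
  · intro h
    have := congrArg (fun μ : Measure ℝ => μ Set.univ) h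
    simp at this
  · refine AEMeasurable.congr (f := fun l : ℝ => ∑' k : ℤ, ENNReal.ofReal
      (l ^ (p / 2 - 1) * exp (-(((z + 2 * π * k) ^ 2 + r ^ 2) * l)))) ?_ ?_
    · exact (Measurable.tsum fun k => by fun_prop).aemeasurable
    · exact (ae_restrict_iff' measurableSet_Ioi).2 (Filter.Eventually.of_forall fun l hl =>
        (Th_term p r z hl).symm)
  · intro h
    rw [h, ENNReal.mul_top hC0] at hw'
    exact hw' rfl
  · refine (ae_restrict_iff' measurableSet_Ioi).2 (Filter.Eventually.of_forall fun l hl => ?_)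
    have hl : (0:ℝ) < l := hl
    have h := Th_strict hl hz.le hzw hw
    have h0 := Th_pos hl z
    rw [ENNReal.ofReal_lt_ofReal_iff (by positivity)]
    exact mul_lt_mul_of_pos_left h (by positivity)

lemma Kr_meas (p : ℝ) : Measurable fun x : ℝ × ℝ => Kr p x.1 x.2 := by
  unfold Kr
  exact Measurable.tsum fun k => by fun_prop



noncomputable def WW (p r : ℝ) (f g : ℝ → ℝ) : ℝ≥0∞ :=
  ∫⁻ x in Set.Ioo (-π) π, ∫⁻ y : ℝ, ENNReal.ofReal (|f x - g y| / sqrt ((x - y) ^ 2 + r ^ 2) ^ p)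

noncomputable def VV (p r : ℝ) (f g : ℝ → ℝ) (l : ℝ) : ℝ≥0∞ :=
  ∫⁻ x in Set.Ioo (-π) π, ∫⁻ z in Set.Ioc (-π) π,
    ENNReal.ofReal |f x - g (x + z)| * (if ENNReal.ofReal l < Kr p r z then 1 else 0)

noncomputable def rho (p r l : ℝ) : ℝ :=
  sSup ({0} ∪ {z | z ∈ Set.Ioo 0 π ∧ ENNReal.ofReal l < Kr p r z})

lemma unfold_line (F : ℝ → ℝ≥0∞) (hF : Measurable F) :
    ∫⁻ z, F z = ∫⁻ z in Set.Ioc (-π) π, ∑' k : ℤ, F (z + 2 * π * k) := by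
  have hp := pi_pos
  have ht := lintegral_tsum (μ := volume.restrict (Set.Ioc (-π) π))
    (f := fun (k : ℤ) (z : ℝ) => F (z + 2 * π * k))
    (fun k => (by fun_prop : Measurable fun z : ℝ => F (z + 2 * π * k)).aemeasurable)
  rw [ht]
  have hU := iUnion_Ioc_add_zsmul two_pi_pos (-π)
  have hD := Set.pairwise_disjoint_Ioc_add_zsmul (-π) (2 * π)
  rw [← setLIntegral_univ, ← hU, lintegral_iUnion (fun _ => measurableSet_Ioc) hD]
  congr 1; ext k
  have h := (measurePreserving_add_right volume (2 * π * k : ℝ)).setLIntegral_comp_preimage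
    (s := Set.Ioc (-π + k • (2 * π)) (-π + (k + 1) • (2 * π))) measurableSet_Ioc hF
  rw [← h]
  congr 2
  ext z
  simp only [Set.mem_preimage, Set.mem_Ioc, zsmul_eq_mul]
  push_cast
  constructor
  · rintro ⟨h1, h2⟩; constructor <;> linarith
  · rintro ⟨h1, h2⟩; constructor <;> linarith

lemma layer (c : ℝ≥0∞) : ∫⁻ l in Set.Ioi (0:ℝ), (if ENNReal.ofReal l < c then (1:ℝ≥0∞) else 0) = c := by
  by_cases hc : c = ⊤
  · subst hc; simp [ENNReal.ofReal_lt_top]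
  · lift c to NNReal using hc
    have : ∀ l ∈ Set.Ioi (0:ℝ), (if ENNReal.ofReal l < (c:ℝ≥0∞) then (1:ℝ≥0∞) else 0) =
        (Set.Iio (c:ℝ)).indicator 1 l := by
      intro l hl
      have hl : (0:ℝ) < l := hl
      rw [← ENNReal.ofReal_coe_nnreal]
      by_cases h : l < c
      · rw [if_pos ((ENNReal.ofReal_lt_ofReal_iff (hl.trans h)).2 h),
          Set.indicator_of_mem (by exact h)]; rfl
      · rw [if_neg (not_lt.2 (ENNReal.ofReal_le_ofReal (not_lt.1 h))),
          Set.indicator_of_notMem (by exact h)]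
    rw [setLIntegral_congr_fun measurableSet_Ioi this, lintegral_indicator_one measurableSet_Iio,
      Measure.restrict_apply measurableSet_Iio, Set.inter_comm, Set.Ioi_inter_Iio]
    simp

lemma swap_meas (μ ν : Measure ℝ) [SFinite μ] [SFinite ν] (G : ℝ × ℝ → ℝ≥0∞) (K : ℝ → ℝ≥0∞)
    (hG : Measurable G) (hK : Measurable K) :
    Measurable fun q : ℝ × ℝ => ∫⁻ z, G (q.2, z) *
      (if ENNReal.ofReal q.1 < K z then (1:ℝ≥0∞) else 0) ∂ν := by
  have hset : MeasurableSet {q : (ℝ × ℝ) × ℝ | ENNReal.ofReal q.1.1 < K q.2} :=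
    measurableSet_lt (by fun_prop) (by fun_prop)
  have hjoint : Measurable fun q : (ℝ × ℝ) × ℝ => G (q.1.2, q.2) *
      (if ENNReal.ofReal q.1.1 < K q.2 then (1:ℝ≥0∞) else 0) :=
    (by fun_prop : Measurable fun q : (ℝ × ℝ) × ℝ => G (q.1.2, q.2)).mul
      (Measurable.ite hset measurable_const measurable_const)
  exact hjoint.lintegral_prod_right'

lemma swap_meas2 (μ ν : Measure ℝ) [SFinite μ] [SFinite ν] (G : ℝ × ℝ → ℝ≥0∞) (K : ℝ → ℝ≥0∞)
    (hG : Measurable G) (hK : Measurable K) :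
    Measurable fun l : ℝ => ∫⁻ x, ∫⁻ z, G (x, z) *
      (if ENNReal.ofReal l < K z then (1:ℝ≥0∞) else 0) ∂ν ∂μ :=
  (swap_meas μ ν G K hG hK).lintegral_prod_right'

lemma swap_layer (μ ν : Measure ℝ) [SFinite μ] [SFinite ν] (G : ℝ × ℝ → ℝ≥0∞) (K : ℝ → ℝ≥0∞)
    (hG : Measurable G) (hK : Measurable K) :
    ∫⁻ l in Set.Ioi (0:ℝ), ∫⁻ x, ∫⁻ z, G (x, z) *
      (if ENNReal.ofReal l < K z then (1:ℝ≥0∞) else 0) ∂ν ∂μ = ∫⁻ x, ∫⁻ z, G (x, z) * K z ∂ν ∂μ := by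
  rw [lintegral_lintegral_swap (swap_meas μ ν G K hG hK).aemeasurable]
  refine lintegral_congr fun x => ?_
  have hset : MeasurableSet {q : ℝ × ℝ | ENNReal.ofReal q.1 < K q.2} :=
    measurableSet_lt (by fun_prop) (by fun_prop)
  have hjoint : Measurable fun q : ℝ × ℝ => G (x, q.2) *
      (if ENNReal.ofReal q.1 < K q.2 then (1:ℝ≥0∞) else 0) :=
    (by fun_prop : Measurable fun q : ℝ × ℝ => G (x, q.2)).mul
      (Measurable.ite hset measurable_const measurable_const)
  rw [lintegral_lintegral_swap hjoint.aemeasurable]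
  refine lintegral_congr fun z => ?_
  rw [lintegral_const_mul, layer]
  exact Measurable.ite (measurableSet_lt (by fun_prop) measurable_const) measurable_const measurable_const

lemma Kr_meas1 (p r : ℝ) : Measurable (Kr p r) := by
  have h1 : Measurable fun z : ℝ => (r, z) := by fun_prop
  have h2 := (Kr_meas p).comp h1
  simp only [Function.comp_def] at h2
  exact h2

lemma VV_meas (p r : ℝ) {f g : ℝ → ℝ} (hf : PF f) (hg : PF g) : Measurable (VV p r f g) := by
  have hfm := hf.meas
  have hgm := hg.meas
  exact swap_meas2 _ _ (fun q : ℝ × ℝ => ENNReal.ofReal |f q.1 - g (q.1 + q.2)|) (Kr p r)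
    (by fun_prop) (Kr_meas1 p r)

lemma WW_VV (p r : ℝ) {f g : ℝ → ℝ} (hf : PF f) (hg : PF g) :
    WW p r f g = ∫⁻ l in Set.Ioi (0:ℝ), VV p r f g l := by
  have hfm := hf.meas
  have hgm := hg.meas
  have h := swap_layer (volume.restrict (Set.Ioo (-π) π)) (volume.restrict (Set.Ioc (-π) π))
    (fun q : ℝ × ℝ => ENNReal.ofReal |f q.1 - g (q.1 + q.2)|) (Kr p r)
    (by fun_prop) (Kr_meas1 p r)
  refine Eq.trans ?_ h.symm
  unfold WW
  refine lintegral_congr fun x => ?_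
  have h1 := lintegral_add_left_eq_self (μ := (volume : Measure ℝ))
    (fun y => ENNReal.ofReal (|f x - g y| / sqrt ((x - y) ^ 2 + r ^ 2) ^ p)) x
  have hm : Measurable fun z =>
    ENNReal.ofReal (|f x - g (x + z)| / sqrt ((x - (x + z)) ^ 2 + r ^ 2) ^ p) := by fun_prop
  rw [← h1, unfold_line _ hm]
  refine lintegral_congr fun z => ?_
  show _ = ENNReal.ofReal |f x - g (x + z)| * Kr p r z
  rw [Kr, ← ENNReal.tsum_mul_left]
  refine tsum_congr fun k => ?_
  rw [← ENNReal.ofReal_mul (abs_nonneg _)]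
  have : g (x + (z + 2 * π * k)) = g (x + z) := by
    rw [← hg.per.int_mul k (x + z)]; congr 1; ring
  rw [this, mul_one_div]
  congr 4; ring

section
variable {p : ℝ} (r : ℝ)

lemma rho_bdd (p r l : ℝ) : BddAbove ({0} ∪ {z | z ∈ Set.Ioo 0 π ∧ ENNReal.ofReal l < Kr p r z}) := by
  refine ⟨π, ?_⟩
  rintro z (rfl | h)
  · exact pi_pos.le
  · exact h.1.2.le

lemma rho_nonneg (p r l : ℝ) : 0 ≤ rho p r l := le_csSup (rho_bdd p r l) (Or.inl rfl)

lemma rho_le (p r l : ℝ) : rho p r l ≤ π := by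
  have hne : ({0} ∪ {z | z ∈ Set.Ioo 0 π ∧ ENNReal.ofReal l < Kr p r z}).Nonempty := ⟨0, Or.inl rfl⟩
  apply csSup_le hne
  rintro z (rfl | h)
  · exact pi_pos.le
  · exact h.1.2.le

lemma rho_lt {p : ℝ} (hp : 1 < p) (r : ℝ) {l z : ℝ} (h0 : 0 < z) (h : z < rho p r l) : ENNReal.ofReal l < Kr p r z := by
  have hne : ({0} ∪ {z | z ∈ Set.Ioo 0 π ∧ ENNReal.ofReal l < Kr p r z}).Nonempty := ⟨0, Or.inl rfl⟩
  obtain ⟨w, hw, hzw⟩ := exists_lt_of_lt_csSup hne h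
  rcases hw with rfl | hw
  · exact absurd h0 (not_lt.2 hzw.le)
  · exact hw.2.trans (Kr_strict hp r h0 hzw hw.1.2.le)

lemma lt_rho {l z : ℝ} (h0 : 0 < z) (h : z < π) (hK : ENNReal.ofReal l < Kr p r z) : z ≤ rho p r l :=
  le_csSup (rho_bdd p r l) (Or.inr ⟨⟨h0, h⟩, hK⟩)

lemma VV_set {p : ℝ} (hp : 1 < p) (r : ℝ) (l : ℝ) (F : ℝ → ℝ≥0∞) :
    ∫⁻ z in Set.Ioc (-π) π, F z * (if ENNReal.ofReal l < Kr p r z then 1 else 0) =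
    ∫⁻ z in Set.Ioo (-rho p r l) (rho p r l), F z := by
  have hπ := pi_pos
  have hr := rho_le p r l
  rw [← lintegral_indicator measurableSet_Ioc, ← lintegral_indicator measurableSet_Ioo]
  apply lintegral_congr_ae
  have n1 : ∀ᵐ z : ℝ, z ≠ 0 := by simp [ae_iff]
  have n2 : ∀ᵐ z : ℝ, z ≠ π := by simp [ae_iff]
  have n3 : ∀ᵐ z : ℝ, z ≠ rho p r l := by simp [ae_iff]
  have n4 : ∀ᵐ z : ℝ, z ≠ - rho p r l := by simp [ae_iff]
  filter_upwards [n1, n2, n3, n4] with z z1 z2 z3 z4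
  have hKabs : Kr p r z = Kr p r |z| := by
    rcases abs_choice z with h | h <;> rw [h]; rw [Kr_even]
  have hz0 : 0 < |z| := abs_pos.2 z1
  by_cases hz : |z| < rho p r l
  · rw [Set.indicator_of_mem (by rw [abs_lt] at hz; exact ⟨by linarith, by linarith⟩),
      Set.indicator_of_mem (by rw [abs_lt] at hz; exact hz), if_pos, mul_one]
    rw [hKabs]; exact rho_lt hp r hz0 hz
  · rw [Set.indicator_of_notMem (s := Set.Ioo _ _) (by rw [abs_lt] at hz; exact hz)]
    by_cases hm : z ∈ Set.Ioc (-π) π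
    · rw [Set.indicator_of_mem hm, if_neg, mul_zero]
      intro hK
      rw [hKabs] at hK
      have h1 : |z| < π := by
        rw [abs_lt]; exact ⟨hm.1, lt_of_le_of_ne hm.2 z2⟩
      have h2 := lt_rho r hz0 h1 hK
      have h3 : |z| = rho p r l := le_antisymm h2 (not_lt.1 hz)
      rcases abs_choice z with h | h
      · exact z3 (by rw [← h, h3])
      · exact z4 (by rw [← h3, h, neg_neg])
    · rw [Set.indicator_of_notMem hm]
end

lemma inner_eq {f g : ℝ → ℝ} (hf : PF f) (hg : PF g) {ρ : ℝ} (hρ : 0 ≤ ρ) (x : ℝ) :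
    ∫⁻ z in Set.Ioo (-ρ) ρ, ENNReal.ofReal |f x - g (x + z)| =
    ENNReal.ofReal (2 * ρ * f x + (1 - 2 * f x) * HH g (2 * ρ) (x - ρ)) := by
  have e : ∀ z, |f x - g (x + z)| = f x + (1 - 2 * f x) * g (x + z) := by
    intro z
    rcases hf.zo x with h | h <;> rcases hg.zo (x + z) with h' | h' <;> rw [h, h'] <;> norm_num
  have hg' : IntervalIntegrable (fun z => g (x + z)) volume (-ρ) ρ := by
    have := (hg.shift x).ii (-ρ) ρ
    simpa [add_comm] using this
  have hi : IntervalIntegrable (fun z => |f x - g (x + z)|) volume (-ρ) ρ := by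
    simp only [e]
    exact intervalIntegrable_const.add (hg'.const_mul _)
  rw [← ofReal_integral_eq_lintegral_ofReal]
  · congr 1
    rw [← integral_Ioc_eq_integral_Ioo, ← intervalIntegral.integral_of_le (by linarith)]
    simp only [e]
    rw [intervalIntegral.integral_add intervalIntegrable_const (hg'.const_mul _),
      intervalIntegral.integral_const_mul, intervalIntegral.integral_comp_add_left, HH]
    simp only [intervalIntegral.integral_const, smul_eq_mul]
    congr 3 <;> ring
  · exact (intervalIntegrable_iff_integrableOn_Ioo_of_le (by linarith)).1 hi
  · exact Filter.Eventually.of_forall fun z => abs_nonneg _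

lemma PhiX_nonneg {f g : ℝ → ℝ} (hf : PF f) (hg : PF g) {ρ : ℝ} (hρ : 0 ≤ ρ) (x : ℝ) :
    0 ≤ 2 * ρ * f x + (1 - 2 * f x) * HH g (2 * ρ) (x - ρ) := by
  have h1 := HH_nonneg hg (l := 2 * ρ) (by linarith) (x - ρ)
  have h2 := HH_le hg (l := 2 * ρ) (by linarith) (x - ρ)
  rcases hf.zo x with h | h <;> rw [h] <;> linarith

noncomputable def Phi (f g : ℝ → ℝ) (ρ : ℝ) : ℝ := 2 * NN g f ρ +
  2 * ρ * ((∫ y in (0:ℝ)..(2 * π), f y) - ∫ y in (0:ℝ)..(2 * π), g y)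

lemma Phi_int {f g : ℝ → ℝ} (hf : PF f) (hg : PF g) (ρ : ℝ) :
    ∫ x in (0:ℝ)..(2 * π), (2 * ρ * f x + (1 - 2 * f x) * HH g (2 * ρ) (x - ρ)) = Phi f g ρ := by
  have hc := HHs_cont hg ρ
  have htot2 : ∫ y in (0:ℝ)..(2 * π), HH g (2 * ρ) (y - ρ) = 2 * ρ * ∫ y in (0:ℝ)..(2 * π), g y := by
    rw [← HH_int hg, intervalIntegral.integral_comp_sub_right]
    have := (HH_per hg (2 * ρ)).intervalIntegral_add_eq (0 - ρ) 0
    rw [zero_add] at this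
    rw [← this]; congr 1; ring
  have e : ∀ x, 2 * ρ * f x + (1 - 2 * f x) * HH g (2 * ρ) (x - ρ) =
      2 * ρ * f x + (2 * ((1 - f x) * HH g (2 * ρ) (x - ρ)) - HH g (2 * ρ) (x - ρ)) := fun x => by ring
  have i1 : IntervalIntegrable (fun x => 2 * ρ * f x) volume 0 (2 * π) := (hf.ii _ _).const_mul _
  have i2 : IntervalIntegrable (fun x => 2 * ((1 - f x) * HH g (2 * ρ) (x - ρ))) volume 0 (2 * π) :=
    ((intervalIntegrable_const.sub (hf.ii _ _)).mul_continuousOn hc.continuousOn).const_mul _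
  have i3 : IntervalIntegrable (fun x => HH g (2 * ρ) (x - ρ)) volume 0 (2 * π) :=
    hc.intervalIntegrable _ _
  simp only [e]
  rw [intervalIntegral.integral_add i1 (i2.sub i3), intervalIntegral.integral_sub i2 i3, htot2,
    intervalIntegral.integral_const_mul, intervalIntegral.integral_const_mul, Phi, NN]
  ring

lemma Phi_nonneg {f g : ℝ → ℝ} (hf : PF f) (hg : PF g) {ρ : ℝ} (hρ : 0 ≤ ρ) : 0 ≤ Phi f g ρ := by
  rw [← Phi_int hf hg]
  exact intervalIntegral.integral_nonneg two_pi_pos.le fun x _ => PhiX_nonneg hf hg hρ x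

lemma VV_eq {p : ℝ} (hp : 1 < p) (r : ℝ) {f g : ℝ → ℝ} (hf : PF f) (hg : PF g) (l : ℝ) :
    VV p r f g l = ENNReal.ofReal (Phi f g (rho p r l)) := by
  have hπ := pi_pos
  have hr := rho_nonneg p r l
  unfold VV
  simp only [VV_set hp r l, inner_eq hf hg hr]
  set ρ := rho p r l
  have hc := HHs_cont hg ρ
  have ii : ∀ a b, IntervalIntegrable (fun x => 2 * ρ * f x + (1 - 2 * f x) * HH g (2 * ρ) (x - ρ))
      volume a b := fun a b => ((hf.ii a b).const_mul _).add
    ((intervalIntegrable_const.sub ((hf.ii a b).const_mul _)).mul_continuousOn hc.continuousOn)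
  rw [← ofReal_integral_eq_lintegral_ofReal]
  · congr 1
    rw [← integral_Ioc_eq_integral_Ioo, ← intervalIntegral.integral_of_le (by linarith), ← Phi_int hf hg]
    have hper : Function.Periodic (fun x => 2 * ρ * f x + (1 - 2 * f x) * HH g (2 * ρ) (x - ρ)) (2 * π) := by
      intro x
      show 2 * ρ * f (x + 2 * π) + (1 - 2 * f (x + 2 * π)) * HH g (2 * ρ) (x + 2 * π - ρ) = _
      rw [hf.per x, show x + 2 * π - ρ = (x - ρ) + 2 * π by ring, HH_per hg _ (x - ρ)]
    have := hper.intervalIntegral_add_eq (-π) 0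
    rw [zero_add] at this
    rw [← this]; congr 1; ring
  · exact (intervalIntegrable_iff_integrableOn_Ioo_of_le (by linarith)).1 (ii _ _)
  · exact Filter.Eventually.of_forall fun x => PhiX_nonneg hf hg hr x

lemma WW_eq {p : ℝ} (hp : 1 < p) (r : ℝ) {f g : ℝ → ℝ} (hf : PF f) (hg : PF g) :
    WW p r f g = ∫⁻ l in Set.Ioi (0:ℝ), ENNReal.ofReal (Phi f g (rho p r l)) := by
  rw [WW_VV p r hf hg]; simp only [VV_eq hp r hf hg]

lemma Phi_arc_le {f g : ℝ → ℝ} (hf : PF f) (hg : PF g) {a b ρ : ℝ}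
    (ha : ∫ y in (0:ℝ)..(2 * π), f y = 2 * a)
    (hb : ∫ y in (0:ℝ)..(2 * π), g y = 2 * b) (hρ : 0 ≤ ρ) (hρ' : ρ ≤ π) :
    Phi (arc a) (arc b) ρ ≤ Phi f g ρ := by
  have a0 : 0 ≤ a := by have := hf.int_nonneg (a := 0) (b := 2 * π) (by positivity); linarith
  have b0 : 0 ≤ b := by have := hg.int_nonneg (a := 0) (b := 2 * π) (by positivity); linarith
  have a1 : a ≤ π := by have := mass_le hf; linarith
  have b1 : b ≤ π := by have := mass_le hg; linarith
  unfold Phi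
  rw [arc_mass a0 a1, arc_mass b0 b1, ha, hb]
  have := riesz hg hf hb ha hρ hρ'
  linarith

lemma WW_arc_le {p : ℝ} (hp : 1 < p) (r : ℝ) {f g : ℝ → ℝ} (hf : PF f) (hg : PF g) {a b : ℝ}
    (ha : ∫ y in (0:ℝ)..(2 * π), f y = 2 * a)
    (hb : ∫ y in (0:ℝ)..(2 * π), g y = 2 * b) : WW p r (arc a) (arc b) ≤ WW p r f g := by
  rw [WW_eq hp r hf hg, WW_eq hp r (arc_PF a) (arc_PF b)]
  exact lintegral_mono fun l => ENNReal.ofReal_le_ofReal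
    (Phi_arc_le hf hg ha hb (rho_nonneg p r l) (rho_le p r l))

lemma WW_congr {p : ℝ} (hp : 1 < p) (r : ℝ) {f g f' g' : ℝ → ℝ} (hf : PF f) (hg : PF g)
    (hf' : PF f') (hg' : PF g') (α : ℝ) (h1 : f =ᵐ[volume] fun x => f' (x + α))
    (h2 : g =ᵐ[volume] fun x => g' (x + α)) : WW p r f g = WW p r f' g' := by
  rw [WW_eq hp r hf hg, WW_eq hp r hf' hg']
  congr 1; ext l; congr 1
  unfold Phi
  rw [NN_congr h2 h1, NN_shift hg' hf', ← mass_shift hf' α, ← mass_shift hg' α]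
  congr 3
  · exact intervalIntegral.integral_congr_ae (by filter_upwards [h1] with x hx _ using hx)
  · exact intervalIntegral.integral_congr_ae (by filter_upwards [h2] with x hx _ using hx)

lemma WW_rigid {p : ℝ} (hp : 1 < p) (r : ℝ) {f g : ℝ → ℝ} (hf : PF f) (hg : PF g) {a b : ℝ}
    (ha : ∫ y in (0:ℝ)..(2 * π), f y = 2 * a)
    (hb : ∫ y in (0:ℝ)..(2 * π), g y = 2 * b) (hfin : WW p r f g ≠ ⊤)
    (hle : WW p r f g ≤ WW p r (arc a) (arc b)) {c d : ℝ} (hc : 0 < c) (hcd : c < d) (hd : d < π) :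
    ∃ ρ, c ≤ ρ ∧ ρ ≤ d ∧ NN g f ρ ≤ NN (arc b) (arc a) ρ := by
  have a0 : 0 ≤ a := by have := hf.int_nonneg (a := 0) (b := 2 * π) (by positivity); linarith
  have b0 : 0 ≤ b := by have := hg.int_nonneg (a := 0) (b := 2 * π) (by positivity); linarith
  have a1 : a ≤ π := by have := mass_le hf; linarith
  have b1 : b ≤ π := by have := mass_le hg; linarith
  have hA := arc_PF a
  have hB := arc_PF b
  have hpt : ∀ l, VV p r (arc a) (arc b) l ≤ VV p r f g l := fun l => by
    rw [VV_eq hp r hf hg, VV_eq hp r hA hB]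
    exact ENNReal.ofReal_le_ofReal (Phi_arc_le hf hg ha hb (rho_nonneg p r l) (rho_le p r l))
  have hle' := (WW_arc_le hp r hf hg ha hb).trans_lt (lt_top_iff_ne_top.2 hfin)
  rw [WW_VV p r hf hg, WW_VV p r hA hB] at hle
  rw [WW_VV p r hA hB] at hle'
  have hae := ae_eq_of_ae_le_of_lintegral_le (Filter.Eventually.of_forall hpt) hle'.ne
    (VV_meas p r hf hg).aemeasurable hle
  have hK := Kr_strict hp r hc hcd hd.le
  have hKd := Kr_fin hp (hc.trans hcd) hd.le r
  obtain ⟨q, hq1, hq2⟩ := exists_between hK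
  have hKq : Kr p r d < q := hq1
  -- open interval of admissible levels
  have hqt : q ≠ ⊤ := (hq2.trans_le le_top).ne
  have hlt : (Kr p r d).toReal < q.toReal := (ENNReal.toReal_lt_toReal hKd hqt).2 hq1
  have hpos : volume (Set.Ioo (Kr p r d).toReal q.toReal) ≠ 0 := by
    simp [hlt]
  have hae' := (ae_restrict_iff' measurableSet_Ioi).1 hae
  obtain ⟨l, hl, hl'⟩ : ∃ l ∈ Set.Ioo (Kr p r d).toReal q.toReal,
      l ∈ Set.Ioi (0:ℝ) → VV p r (arc a) (arc b) l = VV p r f g l := by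
    by_contra hcon
    push Not at hcon
    apply hpos
    refine measure_mono_null (fun l hl => ?_) hae'
    have := hcon l hl
    simpa using this
  have hl0 : 0 < l := lt_of_le_of_lt ENNReal.toReal_nonneg hl.1
  have hl' := hl' hl0
  have k1 : ENNReal.ofReal l < Kr p r c := by
    refine lt_trans ?_ hq2
    exact (ENNReal.ofReal_lt_iff_lt_toReal hl0.le hqt).2 hl.2
  have k2 : Kr p r d < ENNReal.ofReal l := (ENNReal.lt_ofReal_iff_toReal_lt hKd).2 hl.1
  refine ⟨rho p r l, lt_rho r hc (hcd.trans hd) k1, ?_, ?_⟩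
  · by_contra hcon
    push Not at hcon
    exact absurd (rho_lt hp r (hc.trans hcd) hcon) (not_lt.2 k2.le)
  · rw [VV_eq hp r hf hg, VV_eq hp r hA hB] at hl'
    have h1 := (ENNReal.ofReal_eq_ofReal_iff (Phi_nonneg hA hB (rho_nonneg p r l))
      (Phi_nonneg hf hg (rho_nonneg p r l))).1 hl'
    unfold Phi at h1
    rw [arc_mass a0 a1, arc_mass b0 b1, ha, hb] at h1
    linarith



lemma pair_eq {p : ℝ} (hp : 1 < p) (r : ℝ) {f g : ℝ → ℝ} (hf : PF f) (hg : PF g) {a b : ℝ}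
    (ha : ∫ y in (0:ℝ)..(2 * π), f y = 2 * a)
    (hb : ∫ y in (0:ℝ)..(2 * π), g y = 2 * b) (a0 : 0 < a) (hab : a ≤ b) (b1 : b < π)
    (hfin : WW p r g f ≠ ⊤) (hle : WW p r g f ≤ WW p r (arc b) (arc a)) :
    ∃ α, (f =ᵐ[volume] fun x => arc a (x - α)) ∧ (g =ᵐ[volume] fun x => arc b (x - α)) := by
  refine circ_eq hf hg ha hb a0 hab b1 fun ε hε => ?_
  have hδ : 0 < min ε (π - (b - a)) := lt_min hε (by linarith)
  have h1 := min_le_left ε (π - (b - a))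
  have h2 := min_le_right ε (π - (b - a))
  set δ := min ε (π - (b - a))
  obtain ⟨ρ, q1, q2, q3⟩ := WW_rigid hp r hg hf hb ha hfin hle (c := b - a + δ / 3)
    (d := b - a + δ / 2) (by linarith) (by linarith) (by linarith)
  exact ⟨ρ, by linarith, by linarith, q3⟩

lemma rigid_all {X : Type*} [MeasurableSpace X] (ν : Measure X) [SFinite ν] {p : ℝ} (hp : 1 < p)
    (r : X × X → ℝ) (f : X → ℝ → ℝ) (hf : ∀ x, PF (f x)) (a : X → ℝ)
    (ha : ∀ x, ∫ y in (0:ℝ)..(2 * π), f x y = 2 * a x)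
    (h : ∀ᵐ q ∂(ν.prod ν), WW p (r q) (f q.1) (f q.2) ≠ ⊤ ∧
      WW p (r q) (f q.1) (f q.2) ≤ WW p (r q) (arc (a q.1)) (arc (a q.2))) :
    ∃ α, ∀ᵐ x ∂ν, f x =ᵐ[volume] fun t => arc (a x) (t - α) := by
  have h' := (Measure.measurePreserving_swap (μ := ν) (ν := ν)).quasiMeasurePreserving.ae h
  have hh := Measure.ae_ae_of_ae_prod (h.and h')
  have a0 : ∀ x, 0 ≤ a x := fun x => by
    have := (hf x).int_nonneg (a := 0) (b := 2 * π) two_pi_pos.le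
    rw [ha] at this; linarith
  have a1 : ∀ x, a x ≤ π := fun x => by
    have := mass_le (hf x)
    rw [ha] at this; linarith
  have triv : ∀ x α, ¬ (0 < a x ∧ a x < π) → f x =ᵐ[volume] fun t => arc (a x) (t - α) := by
    intro x α hx
    rcases (a0 x).eq_or_lt with h0 | h0
    · rw [← h0]; exact mass0 (hf x) (by rw [ha, ← h0, mul_zero]) α
    · have : a x = π := le_antisymm (a1 x) (not_lt.1 fun h => hx ⟨h0, h⟩)
      rw [this]; exact massπ (hf x) (by rw [ha, this]) α
  by_cases hc : ∀ᵐ x ∂ν, ¬ (0 < a x ∧ a x < π)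
  · exact ⟨0, by filter_upwards [hc] with x hx using triv x 0 hx⟩
  · have hfr : ∃ᵐ x ∂ν, (0 < a x ∧ a x < π) := hc
    obtain ⟨x0, hx0, hgood⟩ := (hfr.and_eventually hh).exists
    have key : ∀ᵐ y ∂ν, (0 < a y ∧ a y < π) → ∃ α, (f x0 =ᵐ[volume] fun t => arc (a x0) (t - α)) ∧
        (f y =ᵐ[volume] fun t => arc (a y) (t - α)) := by
      filter_upwards [hgood] with y hy hay
      rcases le_total (a x0) (a y) with hab | hab
      · exact pair_eq hp _ (hf x0) (hf y) (ha x0) (ha y) hx0.1 hab hay.2 hy.2.1 hy.2.2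
      · obtain ⟨α, q1, q2⟩ := pair_eq hp _ (hf y) (hf x0) (ha y) (ha x0) hay.1 hab hx0.2 hy.1.1 hy.1.2
        exact ⟨α, q2, q1⟩
    obtain ⟨y0, hy0, hk0⟩ := (hfr.and_eventually key).exists
    obtain ⟨α, hα, -⟩ := hk0 hy0
    refine ⟨α, ?_⟩
    filter_upwards [key] with y hy
    by_cases hay : 0 < a y ∧ a y < π
    · obtain ⟨β, q1, q2⟩ := hy hay
      have := arc_unique hx0.1 hx0.2 (hα.symm.trans q1)
      refine q2.trans (Filter.Eventually.of_forall fun t => (this (a y) t).symm)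
    · exact triv y α hay

lemma tonelli_meas {X : Type*} [MeasurableSpace X] (μ l : Measure ℝ)
    [SFinite μ] [SFinite l] (F : (ℝ × X) × (ℝ × X) → ℝ≥0∞) (hF : Measurable F) :
    Measurable fun q : X × X => ∫⁻ x, ∫⁻ y, F ((x, q.1), (y, q.2)) ∂l ∂μ := by
  have h1 : Measurable fun w : ((X × X) × ℝ) × ℝ => F ((w.1.2, w.1.1.1), (w.2, w.1.1.2)) :=
    hF.comp (by fun_prop)
  have h2 : Measurable fun w : (X × X) × ℝ => ∫⁻ y, F ((w.2, w.1.1), (y, w.1.2)) ∂l :=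
    h1.lintegral_prod_right'
  exact h2.lintegral_prod_right'

lemma tonelli4 {X : Type*} [MeasurableSpace X] (ν : Measure X) [SFinite ν] (μ l : Measure ℝ)
    [SFinite μ] [SFinite l] (F : (ℝ × X) × (ℝ × X) → ℝ≥0∞) (hF : Measurable F) :
    ∫⁻ x, ∫⁻ y, F (x, y) ∂(l.prod ν) ∂(μ.prod ν) =
      ∫⁻ q, ∫⁻ x, ∫⁻ y, F ((x, q.1), (y, q.2)) ∂l ∂μ ∂(ν.prod ν) := by
  rw [lintegral_prod _ (tonelli_meas μ l F hF).aemeasurable]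
  have h0 : Measurable fun x : ℝ × X => ∫⁻ y, F (x, y) ∂(l.prod ν) := hF.lintegral_prod_right'
  rw [lintegral_prod_symm _ h0.aemeasurable]
  refine lintegral_congr fun x' => ?_
  have h1 : Measurable fun w : (ℝ × X) × ℝ => F ((w.1.1, x'), (w.2, w.1.2)) := hF.comp (by fun_prop)
  have h2 : Measurable fun w : ℝ × X => ∫⁻ y, F ((w.1, x'), (y, w.2)) ∂l := h1.lintegral_prod_right'
  show _ = ∫⁻ y', ∫⁻ x, ∫⁻ y, F ((x, x'), (y, y')) ∂l ∂μ ∂ν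
  have h4 := lintegral_lintegral_swap (μ := μ) (ν := ν)
    (f := fun x y' => ∫⁻ y, F ((x, x'), (y, y')) ∂l) h2.aemeasurable
  rw [← h4]
  refine lintegral_congr fun x => ?_
  have h3 : Measurable fun w : ℝ × X => F ((x, x'), w) := hF.comp (by fun_prop)
  rw [lintegral_prod_symm _ h3.aemeasurable]

noncomputable def gagF (m : ℕ) (s : ℝ) (u : ℝ × EuclideanSpace ℝ (Fin m) → ℝ) :
    (ℝ × EuclideanSpace ℝ (Fin m)) × (ℝ × EuclideanSpace ℝ (Fin m)) → ℝ≥0∞ := fun w =>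
  ENNReal.ofReal (|u w.1 - u w.2| /
        Real.sqrt ((w.1.1 - w.2.1) ^ 2 + ‖w.1.2 - w.2.2‖ ^ 2) ^ ((m : ℝ) + 1 + s))

lemma gagF_meas (m : ℕ) (s : ℝ) {u : ℝ × EuclideanSpace ℝ (Fin m) → ℝ} (hu : Measurable u) :
    Measurable (gagF m s u) := by
  unfold gagF; fun_prop

lemma gag_eq (m : ℕ) (s : ℝ) {u : ℝ × EuclideanSpace ℝ (Fin m) → ℝ} (hu : Measurable u) :
    gagP m s 1 u = ∫⁻ q : EuclideanSpace ℝ (Fin m) × EuclideanSpace ℝ (Fin m),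
      WW ((m : ℝ) + 1 + s) ‖q.1 - q.2‖ (fun t => u (t, q.1)) (fun t => u (t, q.2))
      ∂((volume : Measure (EuclideanSpace ℝ (Fin m))).prod volume) := by
  have h := tonelli4 (volume : Measure (EuclideanSpace ℝ (Fin m)))
    (volume.restrict (Set.Ioo (-π) π)) volume (gagF m s u) (gagF_meas m s hu)
  refine Eq.trans ?_ h
  have hs : {x : ℝ × EuclideanSpace ℝ (Fin m) | x.1 ∈ Set.Ioo (-π) π} =
      Set.Ioo (-π) π ×ˢ Set.univ := by ext; simp
  have hr : (volume : Measure (ℝ × EuclideanSpace ℝ (Fin m))).restrict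
      {x : ℝ × EuclideanSpace ℝ (Fin m) | x.1 ∈ Set.Ioo (-π) π} =
      (volume.restrict (Set.Ioo (-π) π)).prod volume := by
    rw [hs, Measure.volume_eq_prod, ← Measure.prod_restrict, Measure.restrict_univ]
  unfold gagP
  rw [hr]
  simp only [Real.rpow_one, mul_one]
  rfl

lemma WW_measq (m : ℕ) (s : ℝ) {u : ℝ × EuclideanSpace ℝ (Fin m) → ℝ} (hu : Measurable u) :
    Measurable fun q : EuclideanSpace ℝ (Fin m) × EuclideanSpace ℝ (Fin m) =>
      WW ((m : ℝ) + 1 + s) ‖q.1 - q.2‖ (fun t => u (t, q.1)) (fun t => u (t, q.2)) :=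
  tonelli_meas (volume.restrict (Set.Ioo (-π) π)) volume (gagF m s u) (gagF_meas m s hu)

/-- half-length of the slice -/
noncomputable def hl {m : ℕ} (E : Set (ℝ × EuclideanSpace ℝ (Fin m))) (x' : EuclideanSpace ℝ (Fin m)) : ℝ :=
  (volume {y : ℝ | y ∈ Set.Ioo (-π) π ∧ (y, x') ∈ E}).toReal / 2

lemma hl_meas {m : ℕ} {E : Set (ℝ × EuclideanSpace ℝ (Fin m))} (hE : MeasurableSet E) :
    Measurable (hl E) := by
  have hs : MeasurableSet {q : ℝ × EuclideanSpace ℝ (Fin m) | q.1 ∈ Set.Ioo (-π) π ∧ q ∈ E} :=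
    (measurable_fst measurableSet_Ioo).inter hE
  exact (measurable_measure_prodMk_right (μ := (volume : Measure ℝ)) hs).ennreal_toReal.div_const 2

lemma perRearr1_arc (m : ℕ) (E : Set (ℝ × EuclideanSpace ℝ (Fin m)))
    (x : ℝ × EuclideanSpace ℝ (Fin m)) :
    perRearr1 m (E.indicator fun _ => (1 : ℝ)) x = arc (hl E x.2) x.1 := by
  unfold perRearr1 perRearr periodize arc symmRearr
  set z := x.1 - 2 * π * (⌊(x.1 + π) / (2 * π)⌋ : ℝ)
  have e : ∀ t ∈ Set.Ioi (0:ℝ),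
      (symmSet {y | y ∈ Set.Ioo (-π) π ∧ t < |E.indicator (fun _ => (1 : ℝ)) (y, x.2)|}).indicator
        (fun _ => (1 : ℝ)) z = (Set.Iio (1:ℝ)).indicator (fun _ => if |z| < hl E x.2 then 1 else 0) t := by
    intro t ht
    have ht : 0 < t := ht
    by_cases h1 : t < 1
    · rw [Set.indicator_of_mem (s := Set.Iio (1:ℝ)) h1]
      have hs : {y | y ∈ Set.Ioo (-π) π ∧ t < |E.indicator (fun _ => (1 : ℝ)) (y, x.2)|} =
          {y : ℝ | y ∈ Set.Ioo (-π) π ∧ (y, x.2) ∈ E} := by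
        ext y
        simp only [Set.mem_ofPred_eq]
        refine and_congr_right fun _ => ?_
        by_cases hy : (y, x.2) ∈ E
        · simp [hy, h1]
        · simp [hy, ht.le]
      rw [hs]
      by_cases hz : |z| < hl E x.2
      · rw [if_pos hz, Set.indicator_of_mem]
        exact abs_lt.1 hz
      · rw [if_neg hz, Set.indicator_of_notMem]
        exact fun h => hz (abs_lt.2 h)
    · rw [Set.indicator_of_notMem (s := Set.Iio (1:ℝ)) h1]
      have hs : {y | y ∈ Set.Ioo (-π) π ∧ t < |E.indicator (fun _ => (1 : ℝ)) (y, x.2)|} = ∅ := by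
        ext y
        simp only [Set.mem_ofPred_eq, Set.mem_empty_iff_false, iff_false, not_and, not_lt]
        intro _
        by_cases hy : (y, x.2) ∈ E
        · simp [hy]; linarith
        · simp [hy, ht.le]
      rw [hs]
      simp [symmSet]
  rw [setIntegral_congr_fun measurableSet_Ioi e, setIntegral_indicator measurableSet_Iio,
    Set.Ioi_inter_Iio]
  simp

section
variable {m : ℕ} {E : Set (ℝ × EuclideanSpace ℝ (Fin m))}

lemma perRearr1_meas (hE : MeasurableSet E) :
    Measurable (perRearr1 m (E.indicator fun _ => (1 : ℝ))) := by
  have h := hl_meas hE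
  have e : perRearr1 m (E.indicator fun _ => (1 : ℝ)) = fun x => arc (hl E x.2) x.1 :=
    funext fun x => perRearr1_arc m E x
  rw [e]
  unfold arc
  refine Measurable.ite (measurableSet_lt ?_ (by fun_prop)) measurable_const measurable_const
  have : Measurable fun x : ℝ × EuclideanSpace ℝ (Fin m) => ((⌊(x.1 + π) / (2 * π)⌋ : ℤ) : ℝ) :=
    (measurable_from_top (f := fun n : ℤ => (n:ℝ))).comp
      (Int.measurable_floor.comp (by fun_prop))
  exact (measurable_fst.sub (this.const_mul (2 * π))).abs

lemma slice_PF (hE : MeasurableSet E)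
    (hEper : ∀ x : ℝ × EuclideanSpace ℝ (Fin m), (x.1 + 2 * π, x.2) ∈ E ↔ x ∈ E)
    (x' : EuclideanSpace ℝ (Fin m)) : PF fun t => E.indicator (fun _ => (1:ℝ)) (t, x') where
  meas := (measurable_const.indicator hE).comp (by fun_prop)
  per t := by
    have := hEper (t, x')
    by_cases h : (t, x') ∈ E
    · have h' : (t + 2 * π, x') ∈ E := this.2 h
      simp [h, h']
    · have h' : (t + 2 * π, x') ∉ E := fun h' => h (this.1 h')
      simp [h, h']
  zo t := by
    by_cases h : (t, x') ∈ E <;> simp [h]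

lemma slice_mass (hE : MeasurableSet E)
    (hEper : ∀ x : ℝ × EuclideanSpace ℝ (Fin m), (x.1 + 2 * π, x.2) ∈ E ↔ x ∈ E)
    (x' : EuclideanSpace ℝ (Fin m)) :
    ∫ t in (0:ℝ)..(2 * π), E.indicator (fun _ => (1:ℝ)) (t, x') = 2 * hl E x' := by
  have hπ := pi_pos
  have h := (slice_PF hE hEper x').int_period (-π)
  rw [← h, show -π + 2 * π = π by ring, intervalIntegral.integral_of_le (by linarith),
    integral_Ioc_eq_integral_Ioo]
  have hs : MeasurableSet ((fun t : ℝ => (t, x')) ⁻¹' E) := hE.preimage (by fun_prop)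
  have e : (fun t : ℝ => E.indicator (fun _ => (1:ℝ)) (t, x')) =
      ((fun t : ℝ => (t, x')) ⁻¹' E).indicator (fun _ => (1:ℝ)) := by
    ext t; by_cases h : (t, x') ∈ E <;> simp [h]
  rw [e, setIntegral_indicator hs]
  simp only [integral_const, smul_eq_mul, mul_one, hl, Measure.real]
  rw [Measure.restrict_apply_univ, mul_div_cancel₀ _ (two_ne_zero)]
  rfl

end

theorem stmt_8 (m : ℕ) (s : ℝ) (hs0 : 0 < s) (hs1 : s < 1)
    (E : Set (ℝ × EuclideanSpace ℝ (Fin m))) (hE : MeasurableSet E)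
    (hEper : ∀ x : ℝ × EuclideanSpace ℝ (Fin m), (x.1 + 2 * π, x.2) ∈ E ↔ x ∈ E)
    (hfin : gagP m s 1 (E.indicator fun _ => (1 : ℝ)) ≠ ⊤) :
    gagSeminorm m s 1 (perRearr1 m (E.indicator fun _ => (1 : ℝ))) =
        gagSeminorm m s 1 (E.indicator fun _ => (1 : ℝ)) ↔
      ∃ a : ℝ, ∀ᵐ x ∂(volume : Measure (ℝ × EuclideanSpace ℝ (Fin m))),
        E.indicator (fun _ => (1 : ℝ)) x =
          perRearr1 m (E.indicator fun _ => (1 : ℝ)) (x.1 + a, x.2) := by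
  have hp : 1 < (m : ℝ) + 1 + s := by have := Nat.cast_nonneg (α := ℝ) m; linarith
  have hu : Measurable (E.indicator fun _ => (1 : ℝ)) := measurable_const.indicator hE
  have hv := perRearr1_meas hE
  have hPF := slice_PF hE hEper
  have hmass := slice_mass hE hEper
  have hgu := gag_eq m s hu
  have hgv := gag_eq m s hv
  have hmu := WW_measq m s hu
  simp only [perRearr1_arc] at hgv
  have hle : ∀ q : EuclideanSpace ℝ (Fin m) × EuclideanSpace ℝ (Fin m),
      WW ((m : ℝ) + 1 + s) ‖q.1 - q.2‖ (arc (hl E q.1)) (arc (hl E q.2)) ≤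
      WW ((m : ℝ) + 1 + s) ‖q.1 - q.2‖ (fun t => E.indicator (fun _ => (1 : ℝ)) (t, q.1))
        (fun t => E.indicator (fun _ => (1 : ℝ)) (t, q.2)) := fun q =>
    WW_arc_le hp _ (hPF q.1) (hPF q.2) (hmass q.1) (hmass q.2)
  simp only [gagSeminorm, div_one, ENNReal.rpow_one, perRearr1_arc]
  constructor
  · intro heq
    rw [hgu] at hfin
    have heq2 : ∫⁻ q : EuclideanSpace ℝ (Fin m) × EuclideanSpace ℝ (Fin m),
        WW ((m : ℝ) + 1 + s) ‖q.1 - q.2‖ (arc (hl E q.1)) (arc (hl E q.2))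
        ∂((volume : Measure (EuclideanSpace ℝ (Fin m))).prod volume) = _ :=
      hgv.symm.trans (heq.trans hgu)
    have hae := ae_eq_of_ae_le_of_lintegral_le (Filter.Eventually.of_forall hle)
      (by rw [heq2]; exact hfin) hmu.aemeasurable heq2.ge
    have hft := ae_lt_top hmu hfin
    obtain ⟨α, hα⟩ := rigid_all volume hp
      (fun q : EuclideanSpace ℝ (Fin m) × EuclideanSpace ℝ (Fin m) => ‖q.1 - q.2‖)
      (fun x' t => E.indicator (fun _ => (1 : ℝ)) (t, x')) hPF (hl E) hmass (by
        filter_upwards [hae, hft] with q h1 h2 using ⟨h2.ne, h1.ge⟩)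
    refine ⟨-α, ?_⟩
    have hset : MeasurableSet {w : EuclideanSpace ℝ (Fin m) × ℝ |
        E.indicator (fun _ => (1 : ℝ)) (w.2, w.1) = arc (hl E w.1) (w.2 + -α)} := by
      refine measurableSet_eq_fun (hu.comp (by fun_prop)) ?_
      have := hv.comp (by fun_prop : Measurable fun w : EuclideanSpace ℝ (Fin m) × ℝ =>
        (w.2 + -α, w.1))
      simpa only [Function.comp_def, perRearr1_arc] using this
    have h1 := (Measure.ae_prod_iff_ae_ae (μ := (volume : Measure (EuclideanSpace ℝ (Fin m))))
      (ν := (volume : Measure ℝ)) hset).2 hα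
    exact (Measure.measurePreserving_swap (μ := (volume : Measure ℝ))
      (ν := (volume : Measure (EuclideanSpace ℝ (Fin m))))).quasiMeasurePreserving.ae h1
  · rintro ⟨a, ha⟩
    have h1 := (Measure.measurePreserving_swap (μ := (volume : Measure (EuclideanSpace ℝ (Fin m))))
      (ν := (volume : Measure ℝ))).quasiMeasurePreserving.ae ha
    have h2 := Measure.ae_ae_of_ae_prod h1
    have q1 := (Measure.quasiMeasurePreserving_fst
      (μ := (volume : Measure (EuclideanSpace ℝ (Fin m))))
      (ν := (volume : Measure (EuclideanSpace ℝ (Fin m))))).ae h2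
    have q2 := (Measure.quasiMeasurePreserving_snd
      (μ := (volume : Measure (EuclideanSpace ℝ (Fin m))))
      (ν := (volume : Measure (EuclideanSpace ℝ (Fin m))))).ae h2
    refine hgv.trans (Eq.trans ?_ hgu.symm)
    refine lintegral_congr_ae ?_
    filter_upwards [q1, q2] with q e1 e2
    exact (WW_congr hp _ (hPF q.1) (hPF q.2) (arc_PF (hl E q.1)) (arc_PF (hl E q.2)) a e1 e2).symm
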